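/- If ω is a Ricci-flat Kähler metric on ℂⁿ (with its standard complex structure) such that A⁻¹ ω_{ℂⁿ} ≤ ω ≤ A ω_{ℂⁿ} on all of ℂⁿ for some constant A > 1, where ω_{ℂⁿ} is the standard Euclidean Kähler form, then ω has constant coefficients, i.e. ω is parallel with respect to the Euclidean metric. -/

import Mathlib

noncomputable section

open Matrix

/-- Complex Euclidean space `ℂⁿ`. -/
abbrev Cn (n : ℕ) := EuclideanSpace ℂ (Fin n)

/-- The `j`-th standard coordinate direction in `ℂⁿ`. -/
def coordDir (n : ℕ) (j : Fin n) : Cn n := EuclideanSpace.single j 1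

/-- The Wirtinger derivative `∂f/∂z_j = (∂f/∂x_j - i ∂f/∂y_j)/2` of `f : ℂⁿ → ℂ`. -/
def wdz {n : ℕ} (j : Fin n) (f : Cn n → ℂ) (x : Cn n) : ℂ :=
  (2 : ℂ)⁻¹ * (fderiv ℝ f x (coordDir n j) - Complex.I * fderiv ℝ f x (Complex.I • coordDir n j))

/-- The conjugate Wirtinger derivative `∂f/∂z̄_j = (∂f/∂x_j + i ∂f/∂y_j)/2` of `f : ℂⁿ → ℂ`. -/
def wdzbar {n : ℕ} (j : Fin n) (f : Cn n → ℂ) (x : Cn n) : ℂ :=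
  (2 : ℂ)⁻¹ * (fderiv ℝ f x (coordDir n j) + Complex.I * fderiv ℝ f x (Complex.I • coordDir n j))

/-- A Kähler metric `ω = i g_{i j̄} dz^i ∧ dz̄^j` on `ℂⁿ` (with its standard complex
structure), given by its matrix of coefficients `g_{i j̄}` in the standard coordinates: a
smooth field of Hermitian matrices satisfying the Kähler symmetry
`∂_{z_k} g_{i j̄} = ∂_{z_i} g_{k j̄}` (equivalent to `dω = 0`). -/
structure KahlerMetricCn (n : ℕ) where
  /-- the coefficients `g_{i j̄}` of the metric -/
  g : Cn n → Matrix (Fin n) (Fin n) ℂ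
  smooth : ∀ i j : Fin n, ContDiff ℝ (⊤ : ℕ∞) (fun x => g x i j)
  hermitian : ∀ x, (g x).IsHermitian
  kahler : ∀ (x : Cn n) (i j k : Fin n), wdz k (fun y => g y i j) x = wdz i (fun y => g y k j) x

/-- The Ricci curvature `Ric_{i j̄} = -∂_{z_i} ∂_{z̄_j} log det g` of a Kähler metric on `ℂⁿ`. -/
def KahlerMetricCn.Ric {n : ℕ} (G : KahlerMetricCn n) (x : Cn n) (i j : Fin n) : ℂ :=
  -(wdz i (fun y => wdzbar j (fun w => Complex.log ((G.g w).det)) y) x)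

/-!
Let `Γ_p = ∂_p g * g⁻¹` be the Christoffel symbols of the metric and `S = |Γ|²`, which is Calabi's
third-order quantity `|∂g|²`. Ricci-flatness and the second Bianchi identity make the contracted
second derivatives of `Γ` vanish, so that `ΔS = |∇Γ|² + |∂̄Γ|²`, where `Δ` is the Laplacian of `g`.
Likewise `Δ (tr g) ≥ A⁻¹ S`, the trace being taken with respect to the Euclidean metric.
With the cutoff `η = 1 - |z - x₀|² / r²`, completing squares bounds `Δ (η² S)` from below by
`-C S / r²`, so `η² S + (C A / r²) tr g` is subharmonic on the ball of radius `r`, and the maximum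
principle gives `S x₀ ≤ C' / r²`. Letting `r → ∞` yields `S = 0`, hence `∂g = 0`.

The identities for `Δ` are purely algebraic: they hold over any commutative star ring with commuting
derivations `∂_p`, `∂̄_p` exchanged by the involution.
-/

section MatrixDerivation

variable {𝕜 R l m n : Type*} [CommRing 𝕜] [CommRing R] [Algebra 𝕜 R] (D : Derivation 𝕜 R R)

theorem map_derivation_mul [Fintype m] (M : Matrix l m R) (N : Matrix m n R) :
    (M * N).map D = M.map D * N + M * N.map D := by
  ext i j
  simp only [Matrix.map_apply, Matrix.mul_apply, Matrix.add_apply, map_sum, Derivation.leibniz,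
    smul_eq_mul, ← Finset.sum_add_distrib]
  exact Finset.sum_congr rfl fun k _ => by ring

theorem map_derivation_smul (a : R) (M : Matrix m n R) :
    (a • M).map D = D a • M + a • M.map D := by
  ext i j
  simp only [Matrix.map_apply, Matrix.smul_apply, Matrix.add_apply, Derivation.leibniz, smul_eq_mul]
  ring

theorem map_derivation_sum {κ : Type*} (s : Finset κ) (f : κ → Matrix m n R) :
    (∑ k ∈ s, f k).map D = ∑ k ∈ s, (f k).map D := by
  ext i j
  simp only [Matrix.map_apply, Matrix.sum_apply, map_sum]

theorem map_derivation_one [DecidableEq n] : (1 : Matrix n n R).map D = 0 := by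
  ext i j
  by_cases hij : i = j <;> simp [hij]

theorem derivation_sum_apply {κ : Type*} (s : Finset κ) (D : κ → Derivation 𝕜 R R) (a : R) :
    (∑ k ∈ s, D k) a = ∑ k ∈ s, D k a := by
  rw [← Derivation.coeFnAddMonoidHom_apply, map_sum, Finset.sum_apply]
  rfl

theorem derivation_prod {κ : Type*} [DecidableEq κ] (s : Finset κ) (f : κ → R) :
    D (∏ k ∈ s, f k) = ∑ i ∈ s, ∏ k ∈ s, Function.update f i (D (f i)) k := by
  induction s using Finset.induction_on with
  | empty => simp
  | insert a s ha ih =>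
    rw [Finset.prod_insert ha, Derivation.leibniz, ih, Finset.sum_insert ha, Finset.prod_insert ha,
      Function.update_self, Finset.prod_update_of_notMem ha, smul_eq_mul, smul_eq_mul,
      Finset.mul_sum, add_comm, mul_comm]
    congr 1
    refine Finset.sum_congr rfl fun i hi => ?_
    rw [Finset.prod_insert ha, Function.update_of_ne (ne_of_mem_of_not_mem hi ha).symm]

variable [Fintype n] [DecidableEq n]

theorem map_derivation_inv {M : Matrix n n R} (hM : IsUnit M.det) :
    M⁻¹.map D = -(M⁻¹ * M.map D * M⁻¹) := by
  have key : M.map D * M⁻¹ + M * M⁻¹.map D = 0 := by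
    rw [← map_derivation_mul, M.mul_nonsing_inv hM, map_derivation_one]
  calc M⁻¹.map D = M⁻¹ * (M * M⁻¹.map D) := by rw [← mul_assoc, M.nonsing_inv_mul hM, one_mul]
    _ = -(M⁻¹ * M.map D * M⁻¹) := by
      rw [eq_neg_of_add_eq_zero_right key, mul_neg, mul_assoc]

theorem derivation_det_eq_sum_updateRow (M : Matrix n n R) :
    D M.det = ∑ i, (M.updateRow i (M.map D i)).det := by
  simp only [Matrix.det_apply', map_sum]
  rw [Finset.sum_comm]
  refine Finset.sum_congr rfl fun σ _ => ?_
  rw [Derivation.leibniz, D.map_intCast, smul_zero, add_zero, derivation_prod, smul_eq_mul,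
    Finset.mul_sum, ← Equiv.sum_comp σ fun i => _ * ∏ k, M.updateRow i (M.map D i) (σ k) k]
  refine Finset.sum_congr rfl fun i _ => congrArg _ (Finset.prod_congr rfl fun k _ => ?_)
  rcases eq_or_ne k i with rfl | hki
  · simp
  · rw [Function.update_of_ne hki, Matrix.updateRow_ne (σ.injective.ne hki)]

theorem derivation_det_eq_trace_mul_adjugate (M : Matrix n n R) :
    D M.det = (M.map D * M.adjugate).trace := by
  rw [derivation_det_eq_sum_updateRow]
  refine Finset.sum_congr rfl fun i _ => ?_
  rw [← Matrix.cramer_transpose_apply, Matrix.cramer_eq_adjugate_mulVec,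
    ← Matrix.adjugate_transpose, Matrix.mulVec_transpose]
  rfl

end MatrixDerivation

section TensorForm

/-- The contraction `∑ p q, Q q p • F p q` of a family indexed by a pair (holomorphic index `p`,
antiholomorphic index `q`) with the matrix `Q`, as a linear map in the family. -/
def contract {R V κ : Type*} [CommRing R] [AddCommGroup V] [Module R V] [Fintype κ]
    (Q : Matrix κ κ R) : (κ → κ → V) →ₗ[R] V where
  toFun F := ∑ p, ∑ q, Q q p • F p q
  map_add' F F' := by simp only [Pi.add_apply, smul_add, Finset.sum_add_distrib]
  map_smul' a F := by simp only [Pi.smul_apply, smul_comm _ a, Finset.smul_sum, RingHom.id_apply]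

variable {R κ m n : Type*} [CommRing R] [Fintype κ]

theorem contract_apply {V : Type*} [AddCommGroup V] [Module R V] (Q : Matrix κ κ R)
    (F : κ → κ → V) : contract Q F = ∑ p, ∑ q, Q q p • F p q := rfl

theorem contract_add {V : Type*} [AddCommGroup V] [Module R V] (Q : Matrix κ κ R)
    (F F' : κ → κ → V) :
    (contract Q fun p q => F p q + F' p q) = contract Q F + contract Q F' :=
  map_add (contract Q) F F'

theorem map_contract {V W : Type*} [AddCommGroup V] [Module R V] [AddCommGroup W] [Module R W]
    (φ : V →ₗ[R] W) (Q : Matrix κ κ R) (F : κ → κ → V) :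
    φ (contract Q F) = contract Q fun p q => φ (F p q) := by
  simp only [contract_apply, map_sum, map_smul]

theorem contract_eq_trace_mul (Q : Matrix κ κ R) (F : κ → κ → R) :
    contract Q F = (Q * Matrix.of F).trace := by
  rw [contract_apply, Finset.sum_comm]
  rfl

theorem contract_mul_left {V : Type*} [AddCommGroup V] [Module R V] (Q Γ : Matrix κ κ R)
    (F : κ → κ → V) : contract (Q * Γ) F = contract Q fun p q => ∑ r, Γ p r • F r q := by
  simp only [contract_apply, Matrix.mul_apply, Finset.sum_smul, Finset.smul_sum, smul_smul]
  rw [Finset.sum_comm, Finset.sum_comm (γ := κ) (s := Finset.univ) (t := Finset.univ)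
    (f := fun p q => ∑ r, (Q q p * Γ p r) • F r q)]
  exact Finset.sum_congr rfl fun q _ => Finset.sum_comm

theorem map_derivation_contract {𝕜 : Type*} [CommRing 𝕜] [Algebra 𝕜 R] (D : Derivation 𝕜 R R)
    (Q : Matrix κ κ R) (F : κ → κ → Matrix m n R) :
    (contract Q F).map D = contract (Q.map D) F + contract Q fun p q => (F p q).map D := by
  simp only [contract_apply, map_derivation_sum, map_derivation_smul, Finset.sum_add_distrib,
    Matrix.map_apply]

variable [StarRing R]

theorem star_contract {Q : Matrix κ κ R} (hQ : Q.IsHermitian) (F : κ → κ → R) :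
    star (contract Q F) = contract Q fun p q => star (F q p) := by
  simp only [contract_apply, star_sum, smul_eq_mul, star_mul', hQ.apply]
  exact Finset.sum_comm

variable [Fintype m] [Fintype n]

/-- The sesquilinear form on families `X` of matrices (tensors with three indices) induced by a
matrix for each index: `Q` contracts the indices of the families, `M` the column indices and `N`
the row indices. -/
def tensorForm (Q : Matrix κ κ R) (M : Matrix n n R) (N : Matrix m m R) :
    (κ → Matrix m n R) →ₗ[R] (κ → Matrix m n R) →ₗ⋆[R] R :=
  LinearMap.mk₂'ₛₗ (RingHom.id R) (starRingEnd R)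
    (fun X Y => contract Q fun k l => (X k * M * (Y l)ᴴ * N).trace)
    (fun X X' Y => by
      rw [← map_add]
      congr 1; ext k l
      simp only [Pi.add_apply, Matrix.add_mul, Matrix.trace_add])
    (fun a X Y => by
      rw [← map_smul, RingHom.id_apply]
      congr 1; ext k l
      simp only [Pi.smul_apply, Matrix.smul_mul, Matrix.trace_smul])
    (fun X Y Y' => by
      rw [← map_add]
      congr 1; ext k l
      simp only [Pi.add_apply, Matrix.conjTranspose_add, Matrix.mul_add, Matrix.add_mul,
        Matrix.trace_add])
    (fun a X Y => by
      rw [← map_smul]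
      congr 1; ext k l
      simp only [Pi.smul_apply, Matrix.conjTranspose_smul, Matrix.mul_smul, Matrix.smul_mul,
        Matrix.trace_smul, starRingEnd_apply])

variable (Q : Matrix κ κ R) (M : Matrix n n R) (N : Matrix m m R) (X Y : κ → Matrix m n R)

theorem tensorForm_apply :
    tensorForm Q M N X Y = contract Q fun k l => (X k * M * (Y l)ᴴ * N).trace := rfl

theorem star_tensorForm (hQ : Q.IsHermitian) (hM : M.IsHermitian) (hN : N.IsHermitian) :
    star (tensorForm Q M N X Y) = tensorForm Q M N Y X := by
  rw [tensorForm_apply, star_contract hQ, tensorForm_apply]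
  refine congrArg (contract Q) (funext₂ fun k l => ?_)
  simp only [← Matrix.trace_conjTranspose, Matrix.conjTranspose_mul,
    Matrix.conjTranspose_conjTranspose, hM.eq, hN.eq]
  rw [Matrix.trace_mul_comm]
  simp only [Matrix.mul_assoc]

theorem tensorForm_mul_index (Γ : Matrix κ κ R) :
    tensorForm (Q * Γ) M N X Y = tensorForm Q M N (fun k => ∑ r, Γ k r • X r) Y := by
  simp only [tensorForm_apply, contract_mul_left, Matrix.sum_mul, Matrix.smul_mul,
    Matrix.trace_sum, Matrix.trace_smul]

theorem tensorForm_mul_col (Γ : Matrix n n R) :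
    tensorForm Q (Γ * M) N X Y = tensorForm Q M N (fun k => X k * Γ) Y := by
  simp only [tensorForm_apply, Matrix.mul_assoc]

theorem tensorForm_mul_row (Γ : Matrix m m R) :
    tensorForm Q M (N * Γ) X Y = tensorForm Q M N (fun k => Γ * X k) Y := by
  rw [tensorForm_apply, tensorForm_apply]
  refine congrArg (contract Q) (funext₂ fun k l => ?_)
  rw [← Matrix.mul_assoc, Matrix.trace_mul_comm]
  simp only [Matrix.mul_assoc]

theorem derivation_tensorForm {𝕜 : Type*} [CommRing 𝕜] [Algebra 𝕜 R] {D D' : Derivation 𝕜 R R}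
    (hD : ∀ f, star (D' f) = D (star f)) :
    D (tensorForm Q M N X Y) =
      tensorForm (Q.map D) M N X Y + tensorForm Q (M.map D) N X Y + tensorForm Q M (N.map D) X Y +
        tensorForm Q M N (fun k => (X k).map D) Y + tensorForm Q M N X fun l => (Y l).map D' := by
  have hconj (l : κ) : ((Y l).map D')ᴴ = (Y l)ᴴ.map D := by
    ext i j
    simp only [Matrix.conjTranspose_apply, Matrix.map_apply, hD]
  simp only [tensorForm_apply, contract_apply, map_sum, Derivation.leibniz, smul_eq_mul,
    AddMonoidHom.map_trace, map_derivation_mul, Matrix.add_mul, Matrix.trace_add, mul_add,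
    Finset.sum_add_distrib, hconj, Matrix.map_apply]
  simp only [mul_comm (D _)]
  ring

theorem map_tensorForm {S F : Type*} [CommRing S] [StarRing S] [FunLike F R S] [RingHomClass F R S]
    [StarHomClass F R S] (φ : F) :
    φ (tensorForm Q M N X Y) =
      tensorForm (Q.map φ) (M.map φ) (N.map φ) (fun k => (X k).map φ) (fun k => (Y k).map φ) := by
  simp only [tensorForm_apply, contract_apply, map_sum, smul_eq_mul, map_mul,
    AddMonoidHom.map_trace, Matrix.map_mul, Matrix.map_apply,
    Matrix.conjTranspose_map φ (map_star φ)]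

end TensorForm

/-- Commuting derivations `∂_p` and `∂̄_p` of a commutative star ring, exchanged by the involution:
an algebraic model of the Wirtinger derivatives on complex-valued functions. -/
structure WirtingerFrame (𝕜 ι R : Type*) [CommRing 𝕜] [CommRing R] [Algebra 𝕜 R] [StarRing R] where
  /-- the holomorphic derivative `∂_p` -/
  d : ι → Derivation 𝕜 R R
  /-- the antiholomorphic derivative `∂̄_p` -/
  dbar : ι → Derivation 𝕜 R R
  star_d : ∀ p f, star (d p f) = dbar p (star f)
  d_comm : ∀ p q f, d p (d q f) = d q (d p f)
  d_dbar_comm : ∀ p q f, d p (dbar q f) = dbar q (d p f)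

namespace WirtingerFrame

variable {𝕜 ι R m n : Type*} [CommRing 𝕜] [CommRing R] [Algebra 𝕜 R] [StarRing R]
  (F : WirtingerFrame 𝕜 ι R)

theorem star_dbar (p : ι) (f : R) : star (F.dbar p f) = F.d p (star f) := by
  rw [← star_star (F.d p (star f)), F.star_d, star_star]

theorem conjTranspose_map_d (p : ι) (M : Matrix m n R) : (M.map (F.d p))ᴴ = Mᴴ.map (F.dbar p) := by
  ext i j
  exact F.star_d p (M j i)

theorem map_dbar_map_d (p q : ι) (M : Matrix m n R) :
    (M.map (F.d p)).map (F.dbar q) = (M.map (F.dbar q)).map (F.d p) := by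
  ext i j
  exact (F.d_dbar_comm p q (M i j)).symm

theorem map_d_map_d (p q : ι) (M : Matrix m n R) :
    (M.map (F.d p)).map (F.d q) = (M.map (F.d q)).map (F.d p) := by
  ext i j
  exact F.d_comm q p (M i j)

/-- The componentwise derivative `∂̄_q X` of a family of matrices. -/
def dbarTensor (q : ι) (X : ι → Matrix m n R) : ι → Matrix m n R := fun k => (X k).map (F.dbar q)

end WirtingerFrame

/-- The action of a matrix on tensors `X k i j` with two lower indices `k, i` and one upper index
`j`, by which a connection matrix enters the covariant derivative. -/
def tensorAction {ι R : Type*} [CommRing R] [Fintype ι] :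
    Matrix ι ι R →ₗ[R] (ι → Matrix ι ι R) →ₗ[R] (ι → Matrix ι ι R) :=
  LinearMap.mk₂ R (fun T X k => X k * T - T * X k - ∑ r, T k r • X r)
    (fun T T' X => by
      funext k
      simp only [Pi.add_apply, Matrix.add_apply, mul_add, add_mul, add_smul,
        Finset.sum_add_distrib]
      abel)
    (fun a T X => by
      funext k
      simp only [Pi.smul_apply, Matrix.smul_apply, Matrix.mul_smul, Matrix.smul_mul, smul_sub,
        Finset.smul_sum, smul_assoc])
    (fun T X X' => by
      funext k
      simp only [Pi.add_apply, mul_add, add_mul, smul_add, Finset.sum_add_distrib]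
      abel)
    (fun a T X => by
      funext k
      simp only [Pi.smul_apply, Matrix.mul_smul, Matrix.smul_mul, smul_sub, Finset.smul_sum,
        smul_comm a])

theorem tensorAction_apply {ι R : Type*} [CommRing R] [Fintype ι] (T : Matrix ι ι R)
    (X : ι → Matrix ι ι R) (k : ι) :
    tensorAction T X k = X k * T - T * X k - ∑ r, T k r • X r := rfl

/-- A Kähler metric over a Wirtinger frame: an invertible Hermitian matrix `g` with
`∂_k g_{i j̄} = ∂_i g_{k j̄}`. No positivity is imposed. -/
structure FormalKahlerMetric {𝕜 ι R : Type*} [CommRing 𝕜] [CommRing R] [Algebra 𝕜 R] [StarRing R]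
    [Fintype ι] [DecidableEq ι] (F : WirtingerFrame 𝕜 ι R) where
  /-- the coefficients `g_{i j̄}` -/
  g : Matrix ι ι R
  isUnit_det : IsUnit g.det
  isHermitian : g.IsHermitian
  kahler : ∀ i j k, F.d k (g i j) = F.d i (g k j)

namespace FormalKahlerMetric

variable {𝕜 ι R : Type*} [CommRing 𝕜] [CommRing R] [Algebra 𝕜 R] [StarRing R] [Fintype ι]
  [DecidableEq ι] {F : WirtingerFrame 𝕜 ι R} (K : FormalKahlerMetric F)

/-- The Christoffel symbols `Γ_{pi}^j` of the Chern connection, as matrices `Γ_p = ∂_p g * g⁻¹`. -/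
def christoffel (p : ι) : Matrix ι ι R := K.g.map (F.d p) * K.g⁻¹

/-- The curvature `∂̄_q Γ_p` of the Chern connection (with the sign opposite to the usual one). -/
def curvature (p q : ι) : Matrix ι ι R := (K.christoffel p).map (F.dbar q)

/-- Vanishing of the Ricci curvature, the trace of the curvature. -/
def IsRicciFlat : Prop := ∀ p q, (K.curvature p q).trace = 0

/-- The covariant derivative `∇_p X` of a tensor `X k i j` with two lower indices `k, i` and one
upper index `j`. -/
def covDeriv (p : ι) (X : ι → Matrix ι ι R) : ι → Matrix ι ι R :=
  (fun k => (X k).map (F.d p)) + tensorAction (K.christoffel p) X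

/-- The Hermitian inner product of tensors `X k i j` induced by the metric. -/
def tensorInner : (ι → Matrix ι ι R) →ₗ[R] (ι → Matrix ι ι R) →ₗ⋆[R] R := tensorForm K.g⁻¹ K.g K.g⁻¹

/-- The complex Laplacian `g^{p q̄} ∂_p ∂̄_q`. -/
def laplacian : R →ₗ[𝕜] R where
  toFun f := contract K.g⁻¹ fun p q => F.d p (F.dbar q f)
  map_add' f f' := by simp only [map_add, contract_add]
  map_smul' a f := by
    simp only [contract_apply, Derivation.map_smul, smul_comm _ a, Finset.smul_sum,
      RingHom.id_apply]

/-- Calabi's quantity, the squared norm of the Christoffel symbols. -/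
def calabi : R := K.tensorInner K.christoffel K.christoffel

theorem laplacian_apply (f : R) :
    K.laplacian f = contract K.g⁻¹ fun p q => F.d p (F.dbar q f) := rfl

theorem map_d_metric (p : ι) : K.g.map (F.d p) = K.christoffel p * K.g := by
  rw [christoffel, mul_assoc, K.g.nonsing_inv_mul K.isUnit_det, mul_one]

theorem map_d_inv_metric (p : ι) : K.g⁻¹.map (F.d p) = K.g⁻¹ * -K.christoffel p := by
  rw [map_derivation_inv _ K.isUnit_det, christoffel, mul_neg, mul_assoc]

theorem christoffel_symm (p i j : ι) : K.christoffel p i j = K.christoffel i p j := by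
  simp only [christoffel, Matrix.mul_apply, Matrix.map_apply, K.kahler i _ p]

theorem det_mul_trace_christoffel (p : ι) :
    K.g.det * (K.christoffel p).trace = F.d p K.g.det := by
  rw [derivation_det_eq_trace_mul_adjugate, christoffel, Matrix.inv_def, Matrix.mul_smul,
    Matrix.trace_smul, smul_eq_mul, ← mul_assoc, Ring.mul_inverse_cancel _ K.isUnit_det, one_mul]

theorem star_tensorInner (X Y : ι → Matrix ι ι R) : star (K.tensorInner X Y) = K.tensorInner Y X :=
  star_tensorForm _ _ _ _ _ K.isHermitian.inv K.isHermitian K.isHermitian.inv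

theorem isSelfAdjoint_calabi : IsSelfAdjoint K.calabi := K.star_tensorInner _ _

theorem isSelfAdjoint_trace_metric : IsSelfAdjoint K.g.trace := by
  rw [IsSelfAdjoint, ← Matrix.trace_conjTranspose, K.isHermitian.eq]

theorem d_tensorInner (p : ι) (X Y : ι → Matrix ι ι R) :
    F.d p (K.tensorInner X Y) =
      K.tensorInner (K.covDeriv p X) Y + K.tensorInner X (F.dbarTensor p Y) := by
  have hcov : K.covDeriv p X =
      (fun k => ∑ r, (-K.christoffel p) k r • X r) + (fun k => X k * K.christoffel p) +
        (fun k => -K.christoffel p * X k) + fun k => (X k).map (F.d p) := by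
    funext k
    simp only [covDeriv, Pi.add_apply, tensorAction_apply, Matrix.neg_apply, neg_smul,
      Finset.sum_neg_distrib, neg_mul]
    abel
  rw [tensorInner, derivation_tensorForm _ _ _ _ _ (F.star_dbar p), map_d_metric, map_d_inv_metric,
    tensorForm_mul_index, tensorForm_mul_col, tensorForm_mul_row, hcov]
  simp only [map_add, LinearMap.add_apply]
  rfl

theorem dbar_tensorInner (q : ι) (X Y : ι → Matrix ι ι R) :
    F.dbar q (K.tensorInner X Y) =
      K.tensorInner (F.dbarTensor q X) Y + K.tensorInner X (K.covDeriv q Y) := by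
  rw [← K.star_tensorInner Y X, ← F.star_d, d_tensorInner, star_add, star_tensorInner,
    star_tensorInner, add_comm]

theorem dbar_metric_symm (i j q : ι) : F.dbar q (K.g i j) = F.dbar j (K.g i q) := by
  rw [← K.isHermitian.apply i j, ← K.isHermitian.apply i q, ← F.star_d, ← F.star_d, K.kahler]

theorem curvature_mul_metric (p q : ι) :
    K.curvature p q * K.g =
      (K.g.map (F.d p)).map (F.dbar q) - K.g.map (F.d p) * K.g⁻¹ * K.g.map (F.dbar q) := by
  rw [curvature, christoffel, map_derivation_mul, map_derivation_inv _ K.isUnit_det, mul_neg,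
    ← sub_eq_add_neg, sub_mul]
  simp only [mul_assoc, K.g.nonsing_inv_mul K.isUnit_det, mul_one]

theorem curvature_mul_metric_symm_left (p q i j : ι) :
    (K.curvature p q * K.g) i j = (K.curvature i q * K.g) p j := by
  rw [curvature_mul_metric, curvature_mul_metric]
  simp only [Matrix.sub_apply, Matrix.mul_apply, Matrix.map_apply, K.kahler i _ p]

theorem curvature_mul_metric_symm_right (p q i j : ι) :
    (K.curvature p q * K.g) i j = (K.curvature p j * K.g) i q := by
  rw [curvature_mul_metric, curvature_mul_metric, F.map_dbar_map_d, F.map_dbar_map_d]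
  simp only [Matrix.sub_apply, Matrix.mul_apply, Matrix.map_apply, K.dbar_metric_symm _ j q]

theorem map_d_christoffel_add_mul_symm (p k : ι) :
    (K.christoffel k).map (F.d p) + K.christoffel k * K.christoffel p =
      (K.christoffel p).map (F.d k) + K.christoffel p * K.christoffel k := by
  have hsecond (p k : ι) : (K.christoffel k).map (F.d p) + K.christoffel k * K.christoffel p =
      (K.g.map (F.d k)).map (F.d p) * K.g⁻¹ := by
    conv_lhs => enter [1]; rw [christoffel, map_derivation_mul, map_d_inv_metric, ← mul_assoc]
    rw [← christoffel, mul_neg, neg_add_cancel_right]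
  rw [hsecond, hsecond, F.map_d_map_d]

theorem second_bianchi (p q k : ι) :
    K.covDeriv p (F.dbarTensor q K.christoffel) k =
      K.covDeriv k (F.dbarTensor q K.christoffel) p := by
  have hfirst := congrArg (fun M => M.map (F.dbar q)) (K.map_d_christoffel_add_mul_symm p k)
  simp only [Matrix.map_add _ (map_add (F.dbar q)), map_derivation_mul, F.map_dbar_map_d] at hfirst
  simp only [covDeriv, Pi.add_apply, tensorAction_apply, WirtingerFrame.dbarTensor,
    K.christoffel_symm p k]
  linear_combination (norm := abel) hfirst

theorem dbarTensor_covDeriv (p q : ι) (X : ι → Matrix ι ι R) :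
    F.dbarTensor q (K.covDeriv p X) =
      K.covDeriv p (F.dbarTensor q X) + tensorAction (K.curvature p q) X := by
  funext k
  simp only [WirtingerFrame.dbarTensor, covDeriv, Pi.add_apply, tensorAction_apply, curvature,
    Matrix.map_add _ (map_add (F.dbar q)), Matrix.map_sub _ (map_sub (F.dbar q)),
    map_derivation_sum, map_derivation_mul, map_derivation_smul, F.map_dbar_map_d,
    Finset.sum_add_distrib, Matrix.map_apply]
  abel

variable {K}

/- By the symmetries of the curvature of a Kähler metric, its contraction in the form indices is the
Ricci curvature, up to raising an index. -/
theorem IsRicciFlat.contract_curvature (hK : K.IsRicciFlat) : contract K.g⁻¹ K.curvature = 0 := by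
  suffices h : contract K.g⁻¹ K.curvature * K.g = 0 by
    rw [← mul_one (contract _ _), ← K.g.mul_nonsing_inv K.isUnit_det, ← mul_assoc, h, zero_mul]
  ext i j
  have hsymm (p q : ι) : (K.curvature p q * K.g) i j = (K.curvature i j * K.g) p q := by
    rw [curvature_mul_metric_symm_left, curvature_mul_metric_symm_right]
  calc (contract K.g⁻¹ K.curvature * K.g) i j
      = contract K.g⁻¹ fun p q => (K.curvature p q * K.g) i j := by
        simp only [contract_apply, Finset.sum_mul, Matrix.smul_mul, Matrix.sum_apply,
          Matrix.smul_apply]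
    _ = (K.curvature i j).trace := by
        simp only [hsymm]
        rw [contract_eq_trace_mul, Matrix.trace_mul_comm]
        change (K.curvature i j * K.g * K.g⁻¹).trace = _
        rw [mul_assoc, K.g.mul_nonsing_inv K.isUnit_det, mul_one]
    _ = 0 := hK i j

theorem IsRicciFlat.contract_covDeriv_curvature (hK : K.IsRicciFlat) (k : ι) :
    (contract K.g⁻¹ fun p q => K.covDeriv k (F.dbarTensor q K.christoffel) p) = 0 := by
  have hleft := map_contract (LinearMap.mulLeft R (K.christoffel k)) K.g⁻¹ K.curvature
  have hright := map_contract (LinearMap.mulRight R (K.christoffel k)) K.g⁻¹ K.curvature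
  have hderiv := map_derivation_contract (F.d k) K.g⁻¹ K.curvature
  rw [hK.contract_curvature, map_zero] at hleft hright
  rw [hK.contract_curvature, Matrix.map_zero _ (map_zero _), map_d_inv_metric,
    contract_mul_left] at hderiv
  have hsplit : (fun p q => K.covDeriv k (F.dbarTensor q K.christoffel) p) =
      (fun p q => ∑ r, (-K.christoffel k) p r • K.curvature r q) +
        (fun p q => (K.curvature p q).map (F.d k)) +
        (fun p q => LinearMap.mulRight R (K.christoffel k) (K.curvature p q)) -
        fun p q => LinearMap.mulLeft R (K.christoffel k) (K.curvature p q) := by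
    funext p q
    simp only [covDeriv, WirtingerFrame.dbarTensor, curvature, Pi.add_apply, Pi.sub_apply,
      tensorAction_apply, LinearMap.mulLeft_apply, LinearMap.mulRight_apply, Matrix.neg_apply,
      neg_smul, Finset.sum_neg_distrib]
    abel
  rw [hsplit, map_sub, map_add, map_add, ← hderiv, ← hleft, ← hright, add_zero, sub_zero]

theorem IsRicciFlat.contract_covDeriv_dbarTensor (hK : K.IsRicciFlat) :
    (contract K.g⁻¹ fun p q => K.covDeriv p (F.dbarTensor q K.christoffel)) = 0 := by
  funext k
  rw [← LinearMap.proj_apply (R := R) k (contract _ _), map_contract]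
  simp only [LinearMap.proj_apply, K.second_bianchi _ _ k]
  exact hK.contract_covDeriv_curvature k

theorem IsRicciFlat.contract_dbarTensor_covDeriv (hK : K.IsRicciFlat) :
    (contract K.g⁻¹ fun p q => F.dbarTensor q (K.covDeriv p K.christoffel)) = 0 := by
  have haction := map_contract (tensorAction.flip K.christoffel) K.g⁻¹ K.curvature
  rw [hK.contract_curvature, map_zero] at haction
  simp only [dbarTensor_covDeriv, contract_add]
  rw [hK.contract_covDeriv_dbarTensor, zero_add]
  exact haction.symm

variable (K)

theorem d_calabi (p : ι) :
    F.d p K.calabi = K.tensorInner (K.covDeriv p K.christoffel) K.christoffel +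
      K.tensorInner K.christoffel (F.dbarTensor p K.christoffel) :=
  K.d_tensorInner p _ _

theorem dbar_calabi (q : ι) :
    F.dbar q K.calabi = K.tensorInner (F.dbarTensor q K.christoffel) K.christoffel +
      K.tensorInner K.christoffel (K.covDeriv q K.christoffel) :=
  K.dbar_tensorInner q _ _

/-- The second-order part of `∂_p ∂̄_q` of Calabi's quantity. -/
def calabiHessianRest (p q : ι) : R :=
  K.tensorInner (K.covDeriv p (F.dbarTensor q K.christoffel)) K.christoffel +
    K.tensorInner K.christoffel (F.dbarTensor p (K.covDeriv q K.christoffel))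

theorem d_dbar_calabi (p q : ι) :
    F.d p (F.dbar q K.calabi) =
      K.tensorInner (K.covDeriv p K.christoffel) (K.covDeriv q K.christoffel) +
        K.tensorInner (F.dbarTensor q K.christoffel) (F.dbarTensor p K.christoffel) +
        K.calabiHessianRest p q := by
  rw [dbar_calabi, map_add, d_tensorInner, d_tensorInner, calabiHessianRest]
  ring

/-- `η⁻¹ ∇_p (η² Γ)`, the first of the two squares completed in the Laplacian of `η²` times
Calabi's quantity. -/
def cutoffCovDeriv (η : R) (p : ι) : ι → Matrix ι ι R :=
  η • K.covDeriv p K.christoffel + (2 * F.d p η) • K.christoffel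

/-- `η⁻¹ ∂̄_q (η² Γ)`, the second of the two squares completed in the Laplacian of `η²` times
Calabi's quantity. -/
def cutoffDbar (η : R) (q : ι) : ι → Matrix ι ι R :=
  η • F.dbarTensor q K.christoffel + (2 * F.dbar q η) • K.christoffel

theorem d_dbar_sq_mul_calabi {η : R} (hη : IsSelfAdjoint η) (p q : ι) :
    F.d p (F.dbar q (η ^ 2 * K.calabi)) =
      K.tensorInner (K.cutoffCovDeriv η p) (K.cutoffCovDeriv η q) +
        K.tensorInner (K.cutoffDbar η q) (K.cutoffDbar η p) +
        (2 * η * F.d p (F.dbar q η) - 6 * (F.d p η * F.dbar q η)) * K.calabi +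
        η ^ 2 * K.calabiHessianRest p q := by
  have hstar2 : star (2 : R) = 2 := by simp
  have hcalabi : K.tensorInner K.christoffel K.christoffel = K.calabi := rfl
  simp only [cutoffCovDeriv, cutoffDbar, map_add, LinearMap.add_apply, map_smul, map_smulₛₗ,
    LinearMap.smul_apply, smul_eq_mul, starRingEnd_apply, star_mul', F.star_d, F.star_dbar,
    hη.star_eq, hstar2, hcalabi, pow_two, Derivation.leibniz, d_dbar_calabi, d_calabi]
  rw [dbar_calabi]
  ring

theorem calabi_eq_tensorForm :
    K.calabi =
      tensorForm K.g⁻¹ K.g⁻¹ K.g⁻¹ (fun p => K.g.map (F.d p)) (fun p => K.g.map (F.d p)) := by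
  rw [calabi, tensorInner, tensorForm_apply, tensorForm_apply]
  refine congrArg (contract _) (funext₂ fun p q => ?_)
  rw [christoffel, christoffel, Matrix.conjTranspose_mul, K.isHermitian.inv.eq,
    mul_assoc _ K.g⁻¹ K.g, K.g.nonsing_inv_mul K.isUnit_det, mul_one, ← mul_assoc]

variable {K}

theorem IsRicciFlat.contract_calabiHessianRest (hK : K.IsRicciFlat) :
    contract K.g⁻¹ K.calabiHessianRest = 0 := by
  have hfirst : (contract K.g⁻¹ fun p q =>
      K.tensorInner (K.covDeriv p (F.dbarTensor q K.christoffel)) K.christoffel) = 0 := by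
    have h := map_contract (K.tensorInner.flip K.christoffel) K.g⁻¹
      fun p q => K.covDeriv p (F.dbarTensor q K.christoffel)
    rw [hK.contract_covDeriv_dbarTensor, map_zero] at h
    exact h.symm
  have hsecond : (contract K.g⁻¹ fun p q =>
      K.tensorInner K.christoffel (F.dbarTensor p (K.covDeriv q K.christoffel))) = 0 := by
    have h := map_contract (K.tensorInner.flip K.christoffel) K.g⁻¹
      fun p q => F.dbarTensor q (K.covDeriv p K.christoffel)
    rw [hK.contract_dbarTensor_covDeriv, map_zero] at h
    rw [← star_eq_zero, star_contract K.isHermitian.inv]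
    simp only [star_tensorInner]
    exact h.symm
  exact (contract_add _ _ _).trans (by rw [hfirst, hsecond, add_zero])

theorem IsRicciFlat.laplacian_sq_mul_calabi (hK : K.IsRicciFlat) {η : R} (hη : IsSelfAdjoint η) :
    K.laplacian (η ^ 2 * K.calabi) =
      (contract K.g⁻¹ fun p q => K.tensorInner (K.cutoffCovDeriv η p) (K.cutoffCovDeriv η q)) +
        (contract K.g⁻¹ fun p q => K.tensorInner (K.cutoffDbar η q) (K.cutoffDbar η p)) +
        (2 * η * K.laplacian η - 6 * contract K.g⁻¹ fun p q => F.d p η * F.dbar q η) *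
          K.calabi := by
  have hsplit : (fun p q => F.d p (F.dbar q (η ^ 2 * K.calabi))) =
      (fun p q => K.tensorInner (K.cutoffCovDeriv η p) (K.cutoffCovDeriv η q)) +
        (fun p q => K.tensorInner (K.cutoffDbar η q) (K.cutoffDbar η p)) +
        K.calabi • ((2 * η) • (fun p q => F.d p (F.dbar q η)) -
          (6 : R) • fun p q => F.d p η * F.dbar q η) +
        η ^ 2 • K.calabiHessianRest := by
    funext p q
    simp only [d_dbar_sq_mul_calabi _ hη, Pi.add_apply, Pi.sub_apply, Pi.smul_apply, smul_eq_mul]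
    ring
  rw [laplacian_apply, hsplit]
  simp only [map_add, map_sub, map_smul, hK.contract_calabiHessianRest,
    smul_eq_mul, ← laplacian_apply]
  ring

theorem IsRicciFlat.laplacian_trace (hK : K.IsRicciFlat) :
    K.laplacian K.g.trace =
      tensorForm K.g⁻¹ K.g⁻¹ 1 (fun p => K.g.map (F.d p)) (fun p => K.g.map (F.d p)) := by
  have hcurv := map_contract (Matrix.traceLinearMap ι R R ∘ₗ LinearMap.mulRight R K.g) K.g⁻¹
    K.curvature
  rw [hK.contract_curvature, map_zero] at hcurv
  rw [laplacian_apply, tensorForm_apply]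
  trans contract K.g⁻¹ (fun p q => (K.curvature p q * K.g).trace) + contract K.g⁻¹ fun p q =>
    (K.g.map (F.d p) * K.g⁻¹ * (K.g.map (F.d q))ᴴ * 1).trace
  · rw [← contract_add]
    refine congrArg (contract _) (funext₂ fun p q => ?_)
    rw [curvature_mul_metric, F.conjTranspose_map_d, K.isHermitian.eq, mul_one, ← Matrix.trace_add,
      sub_add_cancel, F.map_dbar_map_d, ← AddMonoidHom.map_trace, ← AddMonoidHom.map_trace]
  · exact add_eq_right.mpr hcurv.symm

end FormalKahlerMetric

section Positivity

open scoped Kronecker ComplexOrder MatrixOrder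

section Kronecker

variable {R κ κ' m n : Type*} [CommRing R] [StarRing R] [Fintype κ] [Fintype κ'] [Fintype m]
  [Fintype n] (Q : Matrix κ κ R) (M : Matrix n n R) (N : Matrix m m R)

theorem trace_mul_conjTranspose_mul_eq_dotProduct (X Y : Matrix m n R) :
    (X * M * Yᴴ * N).trace = star Y.vec ⬝ᵥ (Mᵀ ⊗ₖ N) *ᵥ X.vec := by
  rw [Matrix.kronecker_mulVec_vec, Matrix.star_vec_dotProduct_vec, Matrix.transpose_transpose,
    Matrix.mul_assoc (X * M), Matrix.trace_mul_comm]
  simp only [Matrix.mul_assoc]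

theorem tensorForm_eq_dotProduct_kronecker_mulVec (X Y : κ → Matrix m n R) :
    tensorForm Q M N X Y =
      star (fun k : κ × n × m => (Y k.1).vec k.2) ⬝ᵥ
        (Q ⊗ₖ (Mᵀ ⊗ₖ N)) *ᵥ fun k : κ × n × m => (X k.1).vec k.2 := by
  simp only [tensorForm_apply, contract_apply, trace_mul_conjTranspose_mul_eq_dotProduct,
    dotProduct, mulVec, Fintype.sum_prod_type (α₁ := κ), Matrix.kronecker_apply (A := Q),
    Pi.star_apply, smul_eq_mul, Finset.mul_sum]
  rw [Finset.sum_comm]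
  refine Finset.sum_congr rfl fun l _ => ?_
  rw [Finset.sum_comm]
  exact Finset.sum_congr rfl fun s _ => Finset.sum_congr rfl fun k _ =>
    Finset.sum_congr rfl fun t _ => by ring

theorem contract_tensorForm (Q' : Matrix κ' κ' R) (X : κ' → κ → Matrix m n R) :
    (contract Q' fun p q => tensorForm Q M N (X p) (X q)) =
      tensorForm (Q' ⊗ₖ Q) M N (fun k => X k.1 k.2) (fun k => X k.1 k.2) := by
  simp only [tensorForm_apply, contract_apply, Fintype.sum_prod_type, Matrix.kronecker_apply,
    Finset.smul_sum, mul_smul]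
  exact Finset.sum_congr rfl fun p _ => Finset.sum_comm

end Kronecker

theorem posDef_of_smul_one_le {𝕜 n : Type*} [RCLike 𝕜] [DecidableEq n] {M : Matrix n n 𝕜} {a : ℝ}
    (ha : 0 < a) (hM : a • 1 ≤ M) : M.PosDef := by
  rw [← sub_add_cancel M (a • 1)]
  exact Matrix.PosDef.posSemidef_add hM (Matrix.PosDef.one.smul ha)

variable {𝕜 κ κ' m n : Type*} [RCLike 𝕜] [Fintype κ] [Fintype κ'] [Fintype m] [Fintype n]

theorem tensorForm_self_nonneg {Q : Matrix κ κ 𝕜} {M : Matrix n n 𝕜} {N : Matrix m m 𝕜}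
    (hQ : Q.PosSemidef) (hM : M.PosSemidef) (hN : N.PosSemidef) (X : κ → Matrix m n 𝕜) :
    0 ≤ tensorForm Q M N X X := by
  rw [tensorForm_eq_dotProduct_kronecker_mulVec]
  exact (hQ.kronecker (hM.transpose.kronecker hN)).dotProduct_mulVec_nonneg _

theorem eq_zero_of_tensorForm_self_eq_zero {Q : Matrix κ κ 𝕜} {M : Matrix n n 𝕜}
    {N : Matrix m m 𝕜} (hQ : Q.PosDef) (hM : M.PosDef) (hN : N.PosDef) {X : κ → Matrix m n 𝕜}
    (hX : tensorForm Q M N X X = 0) : X = 0 := by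
  rw [tensorForm_eq_dotProduct_kronecker_mulVec] at hX
  by_contra hne
  refine ((hQ.kronecker (hM.transpose.kronecker hN)).dotProduct_mulVec_pos fun hzero => hne ?_).ne'
    hX
  funext k
  exact Matrix.vec_eq_zero_iff.mp (funext fun s => congrFun hzero (k, s))

theorem contract_tensorForm_nonneg {Q' : Matrix κ' κ' 𝕜} {Q : Matrix κ κ 𝕜} {M : Matrix n n 𝕜}
    {N : Matrix m m 𝕜} (hQ' : Q'.PosSemidef) (hQ : Q.PosSemidef) (hM : M.PosSemidef)
    (hN : N.PosSemidef) (X : κ' → κ → Matrix m n 𝕜) :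
    0 ≤ contract Q' fun p q => tensorForm Q M N (X p) (X q) := by
  rw [contract_tensorForm]
  exact tensorForm_self_nonneg (hQ'.kronecker hQ) hM hN _

theorem tensorForm_self_mono_row {Q : Matrix κ κ 𝕜} {M : Matrix n n 𝕜}
    {N N' : Matrix m m 𝕜} (hQ : Q.PosSemidef) (hM : M.PosSemidef) (hN : N ≤ N')
    (X : κ → Matrix m n 𝕜) : tensorForm Q M N X X ≤ tensorForm Q M N' X X := by
  rw [← sub_nonneg]
  convert tensorForm_self_nonneg hQ hM hN X using 1
  simp only [tensorForm_apply, contract_apply, Matrix.mul_sub, Matrix.trace_sub, smul_sub,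
    Finset.sum_sub_distrib]

theorem trace_mul_nonneg {P Q : Matrix n n 𝕜} (hP : P.PosSemidef) (hQ : Q.PosSemidef) :
    0 ≤ (P * Q).trace := by
  classical
  obtain ⟨B, rfl⟩ := CStarAlgebra.nonneg_iff_eq_star_mul_self.mp hP.nonneg
  rw [Matrix.star_eq_conjTranspose, Matrix.mul_assoc, Matrix.trace_mul_comm]
  exact (hQ.mul_mul_conjTranspose_same B).trace_nonneg

theorem inv_le_smul_one [DecidableEq n] {M : Matrix n n 𝕜} {A : ℝ} (hA : 0 < A)
    (hM : A⁻¹ • 1 ≤ M) : M⁻¹ ≤ A • 1 := by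
  have hpos : M.PosDef := posDef_of_smul_one_le (inv_pos.mpr hA) hM
  have hdet : IsUnit M.det := M.isUnit_iff_isUnit_det.mp hpos.isUnit
  have hcomm : Commute (M - A⁻¹ • 1) M⁻¹ := by
    refine (Commute.sub_left ?_ (Commute.smul_left (Commute.one_left _) _))
    rw [commute_iff_eq, M.mul_nonsing_inv hdet, M.nonsing_inv_mul hdet]
  have hprod : A • 1 - M⁻¹ = A • ((M - A⁻¹ • 1) * M⁻¹) := by
    rw [sub_mul, M.mul_nonsing_inv hdet, smul_one_mul, smul_sub, smul_inv_smul₀ hA.ne']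
  rw [← sub_nonneg, hprod]
  exact smul_nonneg hA.le (hcomm.mul_nonneg (sub_nonneg.mpr hM) hpos.inv.posSemidef.nonneg)

theorem trace_le_of_le_smul_one [DecidableEq n] {M : Matrix n n 𝕜} {A : ℝ} (hM : M ≤ A • 1) :
    M.trace ≤ A * Fintype.card n := by
  have h := Matrix.PosSemidef.trace_nonneg hM
  rwa [Matrix.trace_sub, Matrix.trace_smul, Matrix.trace_one, sub_nonneg,
    RCLike.real_smul_eq_coe_mul] at h

theorem contract_mul_star_eq_dotProduct_mulVec {R : Type*} [CommRing R] [StarRing R]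
    (Q : Matrix κ κ R) (w : κ → R) :
    (contract Q fun p q => w p * star (w q)) = star w ⬝ᵥ Q *ᵥ w := by
  rw [contract_apply, Finset.sum_comm]
  simp only [dotProduct, mulVec, Finset.mul_sum, smul_eq_mul, Pi.star_apply]
  exact Finset.sum_congr rfl fun q _ => Finset.sum_congr rfl fun p _ => by ring

theorem contract_mul_star_le [DecidableEq κ] {Q : Matrix κ κ 𝕜} {A : ℝ} (hQ : Q ≤ A • 1)
    (w : κ → 𝕜) : (contract Q fun p q => w p * star (w q)) ≤ A * (star w ⬝ᵥ w) := by
  have h := Matrix.PosSemidef.dotProduct_mulVec_nonneg hQ w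
  rwa [Matrix.sub_mulVec, dotProduct_sub, sub_nonneg, Matrix.smul_mulVec, Matrix.one_mulVec,
    dotProduct_smul, RCLike.real_smul_eq_coe_mul, ← contract_mul_star_eq_dotProduct_mulVec] at h

theorem le_of_re_dotProduct_mulVec_le {M N : Matrix n n 𝕜}
    (hM : M.IsHermitian) (hN : N.IsHermitian)
    (h : ∀ v, RCLike.re (star v ⬝ᵥ M *ᵥ v) ≤ RCLike.re (star v ⬝ᵥ N *ᵥ v)) : M ≤ N := by
  refine Matrix.PosSemidef.of_dotProduct_mulVec_nonneg (hN.sub hM) fun v => ?_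
  rw [RCLike.nonneg_iff, (hN.sub hM).im_star_dotProduct_mulVec_self, Matrix.sub_mulVec,
    dotProduct_sub, map_sub, sub_nonneg]
  exact ⟨h v, rfl⟩

theorem isHermitian_smul_one {n : Type*} [DecidableEq n] (a : ℝ) :
    (a • 1 : Matrix n n 𝕜).IsHermitian :=
  Matrix.isHermitian_one.smul (IsSelfAdjoint.all a)

theorem re_dotProduct_smul_one_mulVec [DecidableEq n] (a : ℝ) (v : n → ℂ) :
    RCLike.re (star v ⬝ᵥ (a • 1 : Matrix n n ℂ) *ᵥ v) = a * ∑ i, Complex.normSq (v i) := by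
  rw [Matrix.smul_mulVec, Matrix.one_mulVec, dotProduct_smul, RCLike.smul_re]
  simp [dotProduct, Complex.normSq_apply]

end Positivity

section SmoothFunctions

open scoped ContDiff

/-- The star algebra of smooth complex-valued functions. -/
def smoothFunctions (E : Type*) [NormedAddCommGroup E] [NormedSpace ℂ E] :
    StarSubalgebra ℂ (E → ℂ) where
  carrier := {f | ContDiff ℝ ∞ f}
  mul_mem' {f f'} (hf : ContDiff ℝ ∞ f) (hf' : ContDiff ℝ ∞ f') := hf.mul hf'
  add_mem' {f f'} (hf : ContDiff ℝ ∞ f) (hf' : ContDiff ℝ ∞ f') := hf.add hf'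
  algebraMap_mem' c := (contDiff_const : ContDiff ℝ ∞ fun _ : E => c)
  star_mem' {f} (hf : ContDiff ℝ ∞ f) := Complex.conjCLE.contDiff.comp hf

variable {E : Type*} [NormedAddCommGroup E] [NormedSpace ℂ E]

/-- Evaluation of smooth functions at a point. -/
def evalAt (x : E) : smoothFunctions E →⋆ₐ[ℂ] ℂ :=
  (Pi.evalStarAlgHom ℂ (fun _ : E => ℂ) x).comp (smoothFunctions E).subtype

theorem smoothFunctions_ext {f f' : smoothFunctions E} (h : ∀ x, evalAt x f = evalAt x f') :
    f = f' :=
  Subtype.ext (funext h)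

theorem contDiff_evalAt (f : smoothFunctions E) : ContDiff ℝ ∞ fun x => evalAt x f := f.2

theorem differentiable_evalAt (f : smoothFunctions E) : Differentiable ℝ fun x => evalAt x f :=
  (contDiff_evalAt f).differentiable (by simp)

theorem continuous_re_evalAt (f : smoothFunctions E) : Continuous fun x => (evalAt x f).re :=
  Complex.continuous_re.comp (contDiff_evalAt f).continuous

/-- The derivative in a direction `v`, as a derivation of the algebra of smooth functions. -/
def dirDeriv : E →ₗ[ℝ] Derivation ℂ (smoothFunctions E) (smoothFunctions E) where
  toFun v := Derivation.mk'
    { toFun f := ⟨fun x => fderiv ℝ (fun y => evalAt y f) x v,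
        ((contDiff_evalAt f).fderiv_right (m := ∞) (by simp)).clm_apply contDiff_const⟩
      map_add' f f' := smoothFunctions_ext fun x => DFunLike.congr_fun
        (fderiv_add (differentiable_evalAt f x) (differentiable_evalAt f' x)) v
      map_smul' c f := smoothFunctions_ext fun x => DFunLike.congr_fun
        (fderiv_const_smul (differentiable_evalAt f x) c) v }
    fun f f' => smoothFunctions_ext fun x => DFunLike.congr_fun
      (fderiv_mul (differentiable_evalAt f x) (differentiable_evalAt f' x)) v
  map_add' v w := by
    ext f : 1
    exact smoothFunctions_ext fun x => map_add (fderiv ℝ (fun y => evalAt y f) x) v w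
  map_smul' a v := by
    ext f : 1
    exact smoothFunctions_ext fun x => map_smul (fderiv ℝ (fun y => evalAt y f) x) a v

theorem evalAt_dirDeriv (v x : E) (f : smoothFunctions E) :
    evalAt x (dirDeriv v f) = fderiv ℝ (fun y => evalAt y f) x v := rfl

theorem dirDeriv_comm (v w : E) (f : smoothFunctions E) :
    dirDeriv v (dirDeriv w f) = dirDeriv w (dirDeriv v f) := by
  have hsnd (v w x : E) : evalAt x (dirDeriv v (dirDeriv w f)) =
      fderiv ℝ (fderiv ℝ fun y => evalAt y f) x v w := by
    have hd : DifferentiableAt ℝ (fderiv ℝ fun y => evalAt y f) x :=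
      ((contDiff_evalAt f).fderiv_right (m := ∞) (by simp)).differentiable (by simp) x
    simp only [evalAt_dirDeriv]
    rw [fderiv_clm_apply hd (differentiableAt_const w)]
    simp
  have hsymm (x : E) : IsSymmSndFDerivAt ℝ (fun y => evalAt y f) x :=
    (contDiff_evalAt f).contDiffAt.isSymmSndFDerivAt (by simpa using ENat.LEInfty.out)
  exact smoothFunctions_ext fun x => by rw [hsnd, hsnd, (hsymm x).eq]

theorem star_dirDeriv (v : E) (f : smoothFunctions E) :
    star (dirDeriv v f) = dirDeriv v (star f) :=
  smoothFunctions_ext fun x => DFunLike.congr_fun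
    (Complex.conjCLE.toContinuousLinearMap.hasFDerivAt.comp x
      (differentiable_evalAt f x).hasFDerivAt).fderiv.symm v

theorem dirDeriv_complex_smul (c : ℂ) (v : E) :
    dirDeriv (c • v) = (c.re : ℂ) • dirDeriv v + (c.im : ℂ) • dirDeriv (Complex.I • v) := by
  conv_lhs => rw [← Complex.re_add_im c, add_smul, mul_smul, Complex.coe_smul, Complex.coe_smul,
    map_add, map_smul, map_smul]
  rfl

/-- The Wirtinger derivative `(∂_v - i ∂_{iv}) / 2` along a vector `v`, complex linear in `v`. -/
def dz : E →ₗ[ℂ] Derivation ℂ (smoothFunctions E) (smoothFunctions E) where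
  toFun v := (2⁻¹ : ℂ) • (dirDeriv v - Complex.I • dirDeriv (Complex.I • v))
  map_add' v w := by simp only [smul_add, map_add]; module
  map_smul' c v := by
    simp only [smul_comm Complex.I c, dirDeriv_complex_smul c, smul_smul Complex.I, Complex.I_mul_I,
      neg_smul, one_smul, map_neg, RingHom.id_apply]
    conv_rhs => rw [← Complex.re_add_im c]
    match_scalars
    · ring
    · linear_combination (2⁻¹ * c.im : ℂ) * Complex.I_sq

/-- The conjugate Wirtinger derivative `(∂_v + i ∂_{iv}) / 2` along a vector `v`, conjugate linear
in `v`. -/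
def dzbar : E →ₗ⋆[ℂ] Derivation ℂ (smoothFunctions E) (smoothFunctions E) where
  toFun v := (2⁻¹ : ℂ) • (dirDeriv v + Complex.I • dirDeriv (Complex.I • v))
  map_add' v w := by simp only [smul_add, map_add]; module
  map_smul' c v := by
    simp only [smul_comm Complex.I c, dirDeriv_complex_smul c, smul_smul Complex.I, Complex.I_mul_I,
      neg_smul, one_smul, map_neg]
    conv_rhs => rw [← Complex.re_add_im c, map_add, map_mul, Complex.conj_ofReal,
      Complex.conj_ofReal, Complex.conj_I]
    match_scalars
    · ring
    · linear_combination (2⁻¹ * c.im : ℂ) * Complex.I_sq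

theorem dz_apply (v : E) (f : smoothFunctions E) :
    dz v f = (2⁻¹ : ℂ) • (dirDeriv v f - Complex.I • dirDeriv (Complex.I • v) f) := rfl

theorem dzbar_apply (v : E) (f : smoothFunctions E) :
    dzbar v f = (2⁻¹ : ℂ) • (dirDeriv v f + Complex.I • dirDeriv (Complex.I • v) f) := rfl

theorem dz_add_dzbar (v : E) : dz v + dzbar v = dirDeriv v := by
  ext f : 1
  rw [Derivation.add_apply, dz_apply, dzbar_apply]
  module

theorem star_dz (v : E) (f : smoothFunctions E) : star (dz v f) = dzbar v (star f) := by
  simp [dz_apply, dzbar_apply, star_dirDeriv, sub_eq_add_neg]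

theorem star_dzbar (v : E) (f : smoothFunctions E) : star (dzbar v f) = dz v (star f) := by
  rw [← star_star (dz v (star f)), star_dz, star_star]

theorem dz_comm (v w : E) (f : smoothFunctions E) : dz v (dz w f) = dz w (dz v f) := by
  simp only [dz_apply, Derivation.map_smul, map_sub]
  rw [dirDeriv_comm v w, dirDeriv_comm v, dirDeriv_comm _ w, dirDeriv_comm (Complex.I • v)]
  module

theorem dz_dzbar_comm (v w : E) (f : smoothFunctions E) :
    dz v (dzbar w f) = dzbar w (dz v f) := by
  simp only [dz_apply, dzbar_apply, Derivation.map_smul, map_sub, map_add]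
  rw [dirDeriv_comm v w, dirDeriv_comm v, dirDeriv_comm _ w, dirDeriv_comm (Complex.I • v)]
  module

theorem dz_dzbar_self (v : E) (f : smoothFunctions E) :
    dz v (dzbar v f) = (4⁻¹ : ℂ) • (dirDeriv v (dirDeriv v f) +
      dirDeriv (Complex.I • v) (dirDeriv (Complex.I • v) f)) := by
  simp only [dz_apply, dzbar_apply, Derivation.map_smul, map_add]
  rw [dirDeriv_comm v (Complex.I • v)]
  match_scalars
  · ring
  · ring
  · linear_combination (-4⁻¹ : ℂ) * Complex.I_sq

/-- The Wirtinger derivatives along a family of vectors. -/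
def wirtingerFrame {ι : Type*} (b : ι → E) : WirtingerFrame ℂ ι (smoothFunctions E) where
  d p := dz (b p)
  dbar p := dzbar (b p)
  star_d p := star_dz (b p)
  d_comm p q := dz_comm (b p) (b q)
  d_dbar_comm p q := dz_dzbar_comm (b p) (b q)

theorem evalAt_eq_of_dz_eq_zero_of_dzbar_eq_zero {f : smoothFunctions E} (hdz : ∀ v, dz v f = 0)
    (hdzbar : ∀ v, dzbar v f = 0) (x y : E) : evalAt x f = evalAt y f := by
  refine is_const_of_fderiv_eq_zero (differentiable_evalAt f) (fun z => ?_) x y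
  ext v
  rw [← evalAt_dirDeriv, ← dz_add_dzbar, Derivation.add_apply, hdz, hdzbar, add_zero, map_zero]
  rfl

end SmoothFunctions

section MaximumPrinciple

open scoped ComplexOrder InnerProductSpace ContDiff Topology

theorem deriv_deriv_nonpos_of_isLocalMax {f : ℝ → ℝ} {a : ℝ} (hf : ContinuousAt f a)
    (hmax : IsLocalMax f a) : deriv (deriv f) a ≤ 0 := by
  by_contra! hpos
  have hmin : IsLocalMin f a := isLocalMin_of_deriv_deriv_pos hpos hmax.deriv_eq_zero hf
  have hconst : f =ᶠ[nhds a] fun _ => f a := by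
    filter_upwards [hmax, hmin] with t using le_antisymm
  have hzero : deriv (deriv f) a = 0 := by
    rw [hconst.deriv.deriv_eq]
    simp
  exact hpos.ne' hzero

section NormedSpace

variable {E : Type*} [NormedAddCommGroup E] [NormedSpace ℂ E]

theorem hasDerivAt_re_evalAt_add_smul (f : smoothFunctions E) (x v : E) (t : ℝ) :
    HasDerivAt (fun s : ℝ => (evalAt (x + s • v) f).re)
      (evalAt (x + t • v) (dirDeriv v f)).re t := by
  have hline : HasDerivAt (fun s : ℝ => x + s • v) v t := by
    simpa using ((hasDerivAt_id t).smul_const v).const_add x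
  exact Complex.reCLM.hasFDerivAt.comp_hasDerivAt t
    ((differentiable_evalAt f (x + t • v)).hasFDerivAt.comp_hasDerivAt t hline)

theorem im_evalAt_eq_zero {f : smoothFunctions E} (hf : IsSelfAdjoint f) (x : E) :
    (evalAt x f).im = 0 :=
  Complex.conj_eq_iff_im.mp (hf.map (evalAt x)).star_eq

theorem evalAt_dirDeriv_dirDeriv_nonpos {f : smoothFunctions E} (hf : IsSelfAdjoint f) {x : E}
    (hmax : IsLocalMax (fun y => (evalAt y f).re) x) (v : E) :
    evalAt x (dirDeriv v (dirDeriv v f)) ≤ 0 := by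
  have hself : IsSelfAdjoint (dirDeriv v (dirDeriv v f)) := by
    rw [IsSelfAdjoint, star_dirDeriv, star_dirDeriv, hf.star_eq]
  have hline : Continuous fun s : ℝ => x + s • v := by fun_prop
  have hmaxline : IsLocalMax (fun s : ℝ => (evalAt (x + s • v) f).re) 0 :=
    hline.tendsto' 0 x (by simp) |>.eventually hmax |>.mono fun s hs => by simpa using hs
  have h := deriv_deriv_nonpos_of_isLocalMax
    (hasDerivAt_re_evalAt_add_smul f x v 0).continuousAt hmaxline
  rw [funext fun t => (hasDerivAt_re_evalAt_add_smul f x v t).deriv,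
    (hasDerivAt_re_evalAt_add_smul _ x v 0).deriv, zero_smul, add_zero] at h
  exact Complex.le_def.mpr ⟨h, im_evalAt_eq_zero hself x⟩

theorem evalAt_dz_dzbar_self_nonpos {f : smoothFunctions E} (hf : IsSelfAdjoint f) {x : E}
    (hmax : IsLocalMax (fun y => (evalAt y f).re) x) (v : E) :
    evalAt x (dz v (dzbar v f)) ≤ 0 := by
  rw [dz_dzbar_self, map_smul, map_add, smul_eq_mul]
  exact mul_nonpos_of_nonneg_of_nonpos (by simp) (add_nonpos
    (evalAt_dirDeriv_dirDeriv_nonpos hf hmax _) (evalAt_dirDeriv_dirDeriv_nonpos hf hmax _))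

variable {ι : Type*} (b : ι → E)

/-- The complex Hessian `∂_p ∂̄_q f` at a point, along a family of vectors. -/
def complexHessian (f : smoothFunctions E) (x : E) : Matrix ι ι ℂ :=
  Matrix.of fun p q => evalAt x (dz (b p) (dzbar (b q) f))

theorem isHermitian_complexHessian {f : smoothFunctions E} (hf : IsSelfAdjoint f) (x : E) :
    (complexHessian b f x).IsHermitian := by
  refine Matrix.IsHermitian.ext fun p q => ?_
  rw [complexHessian, Matrix.of_apply, Matrix.of_apply, ← map_star, star_dz, star_dzbar,
    hf.star_eq, dz_dzbar_comm]

theorem dotProduct_complexHessian_mulVec [Fintype ι] (f : smoothFunctions E) (x : E) (c : ι → ℂ) :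
    star c ⬝ᵥ complexHessian b f x *ᵥ c =
      evalAt x (dz (∑ p, star (c p) • b p) (dzbar (∑ p, star (c p) • b p) f)) := by
  simp only [dotProduct, mulVec, complexHessian, Matrix.of_apply, Pi.star_apply, map_sum, map_smul,
    map_smulₛₗ, derivation_sum_apply, Derivation.smul_apply, Derivation.map_smul, smul_eq_mul,
    Finset.mul_sum, starRingEnd_apply, star_star]
  rw [Finset.sum_comm]
  exact Finset.sum_congr rfl fun p _ => Finset.sum_congr rfl fun q _ => by ring

theorem posSemidef_neg_complexHessian [Finite ι] {f : smoothFunctions E} (hf : IsSelfAdjoint f)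
    {x : E} (hmax : IsLocalMax (fun y => (evalAt y f).re) x) :
    (-complexHessian b f x).PosSemidef := by
  have := Fintype.ofFinite ι
  refine .of_dotProduct_mulVec_nonneg (isHermitian_complexHessian b hf x).neg fun c => ?_
  rw [Matrix.neg_mulVec, dotProduct_neg, neg_nonneg, dotProduct_complexHessian_mulVec]
  exact evalAt_dz_dzbar_self_nonpos hf hmax _

theorem trace_mul_complexHessian_nonpos [Fintype ι] {f : smoothFunctions E}
    (hf : IsSelfAdjoint f) {x : E} (hmax : IsLocalMax (fun y => (evalAt y f).re) x)
    {Q : Matrix ι ι ℂ} (hQ : Q.PosSemidef) :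
    (Q * complexHessian b f x).trace ≤ 0 := by
  have h := trace_mul_nonneg hQ (posSemidef_neg_complexHessian b hf hmax)
  rwa [Matrix.mul_neg, Matrix.trace_neg, neg_nonneg] at h

theorem re_evalAt_le_of_trace_mul_complexHessian_pos [Fintype ι] [ProperSpace E]
    {Q : E → Matrix ι ι ℂ} (hQ : ∀ x, (Q x).PosSemidef) {f : smoothFunctions E}
    (hf : IsSelfAdjoint f) {x₀ : E} {r M : ℝ} (hr : 0 ≤ r)
    (hpos : ∀ x ∈ Metric.ball x₀ r, 0 < (Q x * complexHessian b f x).trace)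
    (hM : ∀ x ∈ Metric.sphere x₀ r, (evalAt x f).re ≤ M) : (evalAt x₀ f).re ≤ M := by
  obtain ⟨y, hy, hmax⟩ := (isCompact_closedBall x₀ r).exists_isMaxOn
    ⟨x₀, Metric.mem_closedBall_self hr⟩ (continuous_re_evalAt f).continuousOn
  refine (hmax (Metric.mem_closedBall_self hr)).trans (hM y ?_)
  by_contra hsphere
  have hball : y ∈ Metric.ball x₀ r := lt_of_le_of_ne hy hsphere
  have hlocal : IsLocalMax (fun z => (evalAt z f).re) y :=
    hmax.isLocalMax (Metric.closedBall_mem_nhds_of_mem hball)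
  exact (trace_mul_complexHessian_nonpos b hf hlocal (hQ y)).not_gt (hpos y hball)

end NormedSpace

section InnerProductSpace

variable {E : Type*} [NormedAddCommGroup E] [InnerProductSpace ℂ E] (x₀ : E)

/-- The squared distance to `x₀`, as a smooth complex-valued function. -/
def sqDist : smoothFunctions E :=
  ⟨fun x => ⟪x - x₀, x - x₀⟫_ℂ, show ContDiff ℝ ∞ fun x => ⟪x - x₀, x - x₀⟫_ℂ from
    (contDiff_id.sub contDiff_const).inner ℂ (contDiff_id.sub contDiff_const)⟩

theorem evalAt_sqDist (x : E) : evalAt x (sqDist x₀) = ((‖x - x₀‖ ^ 2 : ℝ) : ℂ) := by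
  push_cast
  exact inner_self_eq_norm_sq_to_K (𝕜 := ℂ) (x - x₀)

theorem isSelfAdjoint_sqDist : IsSelfAdjoint (sqDist x₀) :=
  smoothFunctions_ext fun x => by
    rw [map_star, evalAt_sqDist]
    exact Complex.conj_ofReal _

theorem evalAt_dirDeriv_sqDist (v x : E) :
    evalAt x (dirDeriv v (sqDist x₀)) = ⟪x - x₀, v⟫_ℂ + ⟪v, x - x₀⟫_ℂ := by
  have hsub : HasFDerivAt (fun y : E => y - x₀) (ContinuousLinearMap.id ℝ E) x :=
    (hasFDerivAt_id x).sub_const x₀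
  exact DFunLike.congr_fun (hsub.inner ℂ hsub).fderiv v

theorem evalAt_dz_sqDist (v x : E) : evalAt x (dz v (sqDist x₀)) = ⟪x - x₀, v⟫_ℂ := by
  simp only [dz_apply, map_smul, map_sub, evalAt_dirDeriv_sqDist, inner_smul_left, inner_smul_right,
    smul_eq_mul, Complex.conj_I]
  linear_combination 2⁻¹ * (⟪v, x - x₀⟫_ℂ - ⟪x - x₀, v⟫_ℂ) * Complex.I_sq

theorem evalAt_dzbar_sqDist (v x : E) : evalAt x (dzbar v (sqDist x₀)) = ⟪v, x - x₀⟫_ℂ := by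
  simp only [dzbar_apply, map_smul, map_add, evalAt_dirDeriv_sqDist, inner_smul_left,
    inner_smul_right, smul_eq_mul, Complex.conj_I]
  linear_combination 2⁻¹ * (⟪x - x₀, v⟫_ℂ - ⟪v, x - x₀⟫_ℂ) * Complex.I_sq

theorem evalAt_dz_dzbar_sqDist (v w x : E) :
    evalAt x (dz v (dzbar w (sqDist x₀))) = ⟪w, v⟫_ℂ := by
  have hsub : HasFDerivAt (fun y : E => y - x₀) (ContinuousLinearMap.id ℝ E) x :=
    (hasFDerivAt_id x).sub_const x₀
  have hdir (v : E) : evalAt x (dirDeriv v (dzbar w (sqDist x₀))) = ⟪w, v⟫_ℂ := by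
    rw [evalAt_dirDeriv, funext fun y => evalAt_dzbar_sqDist x₀ w y,
      ((hasFDerivAt_const w x).inner ℂ hsub).fderiv]
    simp
  rw [dz_apply, map_smul, map_sub, map_smul, hdir, hdir, inner_smul_right, smul_eq_mul, smul_eq_mul]
  linear_combination -2⁻¹ * ⟪w, v⟫_ℂ * Complex.I_sq

variable {ι : Type*} [Fintype ι] (b : OrthonormalBasis ι ℂ E)

theorem complexHessian_sqDist [DecidableEq ι] (x : E) : complexHessian b (sqDist x₀) x = 1 := by
  ext p q
  rw [complexHessian, Matrix.of_apply, evalAt_dz_dzbar_sqDist,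
    orthonormal_iff_ite.mp b.orthonormal, Matrix.one_apply]
  simp only [eq_comm]

variable {x₀}

theorem re_evalAt_le_of_trace_mul_complexHessian_nonneg [Nonempty ι] {Q : E → Matrix ι ι ℂ}
    (hQ : ∀ x, (Q x).PosDef) {f : smoothFunctions E} (hf : IsSelfAdjoint f) {r M : ℝ}
    (hr : 0 ≤ r) (hnonneg : ∀ x ∈ Metric.ball x₀ r, 0 ≤ (Q x * complexHessian b f x).trace)
    (hM : ∀ x ∈ Metric.sphere x₀ r, (evalAt x f).re ≤ M) : (evalAt x₀ f).re ≤ M := by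
  classical
  have : FiniteDimensional ℂ E := b.toBasis.finiteDimensional_of_finite
  have hev (ε : ℝ) (x : E) : (evalAt x (f + (ε : ℂ) • sqDist x₀)).re =
      (evalAt x f).re + ε * ‖x - x₀‖ ^ 2 := by
    rw [map_add, map_smul, evalAt_sqDist, smul_eq_mul, Complex.add_re, Complex.re_ofReal_mul,
      Complex.ofReal_re]
  have hhess (ε : ℝ) (x : E) :
      complexHessian b (f + (ε : ℂ) • sqDist x₀) x = complexHessian b f x + (ε : ℂ) • 1 := by
    rw [← complexHessian_sqDist x₀ b x]
    ext p q
    simp only [complexHessian, Matrix.of_apply, Matrix.add_apply, Matrix.smul_apply, map_add,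
      Derivation.map_smul, map_smul]
  have hperturb (ε : ℝ) (hε : 0 < ε) :
      (evalAt x₀ (f + (ε : ℂ) • sqDist x₀)).re ≤ M + ε * r ^ 2 := by
    refine re_evalAt_le_of_trace_mul_complexHessian_pos b (fun x => (hQ x).posSemidef)
      (hf.add (.smul (Complex.conj_ofReal ε) (isSelfAdjoint_sqDist x₀))) hr (fun x hx => ?_)
      fun x hx => ?_
    · rw [hhess, mul_add, Matrix.trace_add, Matrix.mul_smul, mul_one, Matrix.trace_smul]
      exact add_pos_of_nonneg_of_pos (hnonneg x hx)
        (mul_pos (Complex.zero_lt_real.mpr hε) (hQ x).trace_pos)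
    · rw [hev, ← dist_eq_norm, hx]
      gcongr
      exact hM x hx
  have hlim : Filter.Tendsto (fun ε : ℝ => M + ε * r ^ 2) (𝓝[>] 0) (𝓝 M) :=
    (Continuous.tendsto' (by fun_prop) 0 M (by simp)).mono_left nhdsWithin_le_nhds
  refine ge_of_tendsto hlim (eventually_nhdsWithin_of_forall fun ε hε => ?_)
  simpa only [hev, sub_self, norm_zero, zero_pow two_ne_zero, mul_zero, add_zero] using
    hperturb ε hε

end InnerProductSpace

end MaximumPrinciple

section Cutoff

variable {E : Type*} [NormedAddCommGroup E] [InnerProductSpace ℂ E] (x₀ : E) (c : ℝ)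

/-- The cutoff function `1 - c ‖x - x₀‖²`. -/
def cutoff : smoothFunctions E := 1 - (c : ℂ) • sqDist x₀

theorem isSelfAdjoint_cutoff : IsSelfAdjoint (cutoff x₀ c) :=
  (IsSelfAdjoint.one _).sub (.smul (Complex.conj_ofReal c) (isSelfAdjoint_sqDist x₀))

theorem evalAt_cutoff (x : E) : evalAt x (cutoff x₀ c) = (1 - c * ‖x - x₀‖ ^ 2 : ℝ) := by
  rw [cutoff, map_sub, map_one, map_smul, evalAt_sqDist, smul_eq_mul]
  push_cast
  rfl

theorem derivation_cutoff (D : Derivation ℂ (smoothFunctions E) (smoothFunctions E)) :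
    D (cutoff x₀ c) = -(c : ℂ) • D (sqDist x₀) := by
  rw [cutoff, map_sub, D.map_one_eq_zero, D.map_smul, zero_sub, neg_smul]

end Cutoff

namespace FormalKahlerMetric

open scoped ComplexOrder MatrixOrder InnerProductSpace

variable {ι : Type*} [Fintype ι] [DecidableEq ι]

section NormedSpace

variable {E : Type*} [NormedAddCommGroup E] [NormedSpace ℂ E] {b : ι → E}
  (K : FormalKahlerMetric (wirtingerFrame b)) (x : E)

/-- The value of the metric at a point. -/
def metricAt : Matrix ι ι ℂ := K.g.map (evalAt x)

/-- The value at a point of the derivatives `∂_p g` of the metric. -/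
def metricDerivAt (p : ι) : Matrix ι ι ℂ := (K.g.map (dz (b p))).map (evalAt x)

/-- The function `η² S + κ tr g`, where `S` is Calabi's quantity, to which the maximum principle is
applied. -/
def testFunction (η : smoothFunctions E) (κ : ℝ) : smoothFunctions E :=
  η ^ 2 * K.calabi + (κ : ℂ) • K.g.trace

theorem isSelfAdjoint_testFunction {η : smoothFunctions E} (hη : IsSelfAdjoint η) (κ : ℝ) :
    IsSelfAdjoint (K.testFunction η κ) :=
  ((hη.pow 2).mul K.isSelfAdjoint_calabi).add
    (.smul (Complex.conj_ofReal κ) K.isSelfAdjoint_trace_metric)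

theorem map_evalAt_inv_metric : K.g⁻¹.map (evalAt x) = (K.metricAt x)⁻¹ := by
  refine (Matrix.inv_eq_right_inv ?_).symm
  rw [metricAt, ← Matrix.map_mul, K.g.mul_nonsing_inv K.isUnit_det,
    Matrix.map_one _ (map_zero _) (map_one _)]

theorem evalAt_trace_metric : evalAt x K.g.trace = (K.metricAt x).trace :=
  AddMonoidHom.map_trace (evalAt x) K.g

theorem evalAt_contract_inv_metric (f : ι → ι → smoothFunctions E) :
    evalAt x (contract K.g⁻¹ f) = contract (K.metricAt x)⁻¹ fun p q => evalAt x (f p q) := by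
  simp only [contract_apply, map_sum, smul_eq_mul, map_mul, ← map_evalAt_inv_metric,
    Matrix.map_apply]

theorem evalAt_laplacian (f : smoothFunctions E) :
    evalAt x (K.laplacian f) = ((K.metricAt x)⁻¹ * complexHessian b f x).trace := by
  rw [laplacian_apply, evalAt_contract_inv_metric, contract_eq_trace_mul]
  rfl

theorem evalAt_calabi :
    evalAt x K.calabi = tensorForm (K.metricAt x)⁻¹ (K.metricAt x)⁻¹ (K.metricAt x)⁻¹
      (K.metricDerivAt x) (K.metricDerivAt x) := by
  rw [calabi_eq_tensorForm, map_tensorForm, map_evalAt_inv_metric]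
  rfl

theorem evalAt_tensorInner (X Y : ι → Matrix ι ι (smoothFunctions E)) :
    evalAt x (K.tensorInner X Y) = tensorForm (K.metricAt x)⁻¹ (K.metricAt x) (K.metricAt x)⁻¹
      (fun k => (X k).map (evalAt x)) (fun k => (Y k).map (evalAt x)) := by
  rw [tensorInner, map_tensorForm, map_evalAt_inv_metric]
  rfl

variable {K x}

theorem evalAt_calabi_nonneg (hg : (K.metricAt x).PosDef) : 0 ≤ evalAt x K.calabi := by
  have hinv := hg.inv.posSemidef
  rw [evalAt_calabi]
  exact tensorForm_self_nonneg hinv hinv hinv _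

theorem metricDerivAt_eq_zero (hg : (K.metricAt x).PosDef) (hcalabi : evalAt x K.calabi = 0) :
    K.metricDerivAt x = 0 := by
  rw [evalAt_calabi] at hcalabi
  exact eq_zero_of_tensorForm_self_eq_zero hg.inv hg.inv hg.inv hcalabi

theorem IsRicciFlat.evalAt_calabi_le (hK : K.IsRicciFlat) {A : ℝ} (hA : 0 < A)
    (hg : A⁻¹ • 1 ≤ K.metricAt x) : evalAt x K.calabi ≤ A * evalAt x (K.laplacian K.g.trace) := by
  have hinv := (posDef_of_smul_one_le (inv_pos.mpr hA) hg).inv.posSemidef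
  have hscale : tensorForm (K.metricAt x)⁻¹ (K.metricAt x)⁻¹ (A • 1) (K.metricDerivAt x)
      (K.metricDerivAt x) = A * tensorForm (K.metricAt x)⁻¹ (K.metricAt x)⁻¹ 1
        (K.metricDerivAt x) (K.metricDerivAt x) := by
    simp only [tensorForm_apply, contract_apply, Matrix.mul_smul, Matrix.trace_smul, smul_eq_mul,
      Complex.real_smul, Finset.mul_sum, mul_left_comm]
  rw [hK.laplacian_trace, map_tensorForm, map_evalAt_inv_metric,
    Matrix.map_one _ (map_zero _) (map_one _), evalAt_calabi]
  exact (tensorForm_self_mono_row hinv hinv (inv_le_smul_one hA hg) _).trans_eq hscale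

theorem evalAt_contract_tensorInner_nonneg (hg : (K.metricAt x).PosDef)
    (X : ι → ι → Matrix ι ι (smoothFunctions E)) :
    0 ≤ evalAt x (contract K.g⁻¹ fun p q => K.tensorInner (X p) (X q)) := by
  have hinv := hg.inv.posSemidef
  simp only [evalAt_contract_inv_metric, evalAt_tensorInner]
  exact contract_tensorForm_nonneg hinv hinv hg.posSemidef hinv _

theorem evalAt_contract_tensorInner_swap_nonneg (hg : (K.metricAt x).PosDef)
    (X : ι → ι → Matrix ι ι (smoothFunctions E)) :
    0 ≤ evalAt x (contract K.g⁻¹ fun p q => K.tensorInner (X q) (X p)) := by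
  have hinv := hg.inv.posSemidef
  simp only [evalAt_contract_inv_metric, evalAt_tensorInner]
  rw [contract_apply, Finset.sum_comm]
  exact contract_tensorForm_nonneg hinv.transpose hinv hg.posSemidef hinv fun p k =>
    (X p k).map (evalAt x)

theorem IsRicciFlat.le_evalAt_laplacian_sq_mul_calabi (hK : K.IsRicciFlat)
    (hg : (K.metricAt x).PosDef) {η : smoothFunctions E} (hη : IsSelfAdjoint η) :
    evalAt x (2 * η * K.laplacian η - 6 * contract K.g⁻¹ fun p q => dz (b p) η * dzbar (b q) η) *
      evalAt x K.calabi ≤ evalAt x (K.laplacian (η ^ 2 * K.calabi)) := by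
  rw [hK.laplacian_sq_mul_calabi hη, map_add, map_add, map_mul]
  exact le_add_of_nonneg_left (add_nonneg (evalAt_contract_tensorInner_nonneg hg _)
    (evalAt_contract_tensorInner_swap_nonneg hg _))

theorem IsRicciFlat.evalAt_laplacian_testFunction_nonneg (hK : K.IsRicciFlat) {A : ℝ}
    (hA : 0 < A) (hg : A⁻¹ • 1 ≤ K.metricAt x) {η : smoothFunctions E} (hη : IsSelfAdjoint η)
    {C : ℝ} (hC : 0 ≤ C)
    (hcutoff : -(C : ℂ) ≤ evalAt x (2 * η * K.laplacian η -
      6 * contract K.g⁻¹ fun p q => dz (b p) η * dzbar (b q) η)) :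
    0 ≤ evalAt x (K.laplacian (K.testFunction η (C * A))) := by
  have hpos := posDef_of_smul_one_le (inv_pos.mpr hA) hg
  have hC' : (0 : ℂ) ≤ C := Complex.zero_le_real.mpr hC
  calc (0 : ℂ) = -C * evalAt x K.calabi + C * evalAt x K.calabi := by ring
    _ ≤ evalAt x (K.laplacian (η ^ 2 * K.calabi)) +
        C * (A * evalAt x (K.laplacian K.g.trace)) := by
      refine add_le_add (le_trans ?_ (hK.le_evalAt_laplacian_sq_mul_calabi hpos hη))
        (mul_le_mul_of_nonneg_left (hK.evalAt_calabi_le hA hg) hC')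
      exact mul_le_mul_of_nonneg_right hcutoff (evalAt_calabi_nonneg hpos)
    _ = evalAt x (K.laplacian (K.testFunction η (C * A))) := by
      rw [testFunction, map_add, map_smul, map_add, map_smul, smul_eq_mul, Complex.ofReal_mul,
        mul_assoc]

end NormedSpace

section InnerProductSpace

variable {E : Type*} [NormedAddCommGroup E] [InnerProductSpace ℂ E]
  {b : OrthonormalBasis ι ℂ E} (K : FormalKahlerMetric (wirtingerFrame b)) (x₀ x : E)

theorem evalAt_laplacian_cutoff (c : ℝ) :
    evalAt x (K.laplacian (cutoff x₀ c)) = -(c * (K.metricAt x)⁻¹.trace) := by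
  have hhess : complexHessian b (cutoff x₀ c) x = -(c : ℂ) • 1 := by
    rw [← complexHessian_sqDist x₀ b x]
    ext p q
    simp only [complexHessian, Matrix.of_apply, Matrix.smul_apply, derivation_cutoff,
      Derivation.map_smul, map_smul]
  rw [evalAt_laplacian, hhess, Matrix.mul_smul, mul_one, Matrix.trace_smul, smul_eq_mul, neg_mul]

theorem re_evalAt_testFunction_cutoff (c κ : ℝ) :
    (evalAt x (K.testFunction (cutoff x₀ c) κ)).re =
      (1 - c * ‖x - x₀‖ ^ 2) ^ 2 * (evalAt x K.calabi).re + κ * (K.metricAt x).trace.re := by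
  rw [testFunction, map_add, map_mul, map_pow, map_smul, evalAt_cutoff, evalAt_trace_metric,
    smul_eq_mul, ← Complex.ofReal_pow, Complex.add_re, Complex.re_ofReal_mul,
    Complex.re_ofReal_mul]

variable {K x}

theorem evalAt_gradient_cutoff_le {A : ℝ} (hinv : (K.metricAt x)⁻¹ ≤ A • 1) (c : ℝ) :
    evalAt x (contract K.g⁻¹ fun p q => dz (b p) (cutoff x₀ c) * dzbar (b q) (cutoff x₀ c)) ≤
      (A * (c * ‖x - x₀‖) ^ 2 : ℝ) := by
  have hgrad (p q : ι) : evalAt x (dz (b p) (cutoff x₀ c) * dzbar (b q) (cutoff x₀ c)) =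
      -c * ⟪x - x₀, b p⟫_ℂ * star (-c * ⟪x - x₀, b q⟫_ℂ) := by
    rw [map_mul, derivation_cutoff, derivation_cutoff, map_smul, map_smul, evalAt_dz_sqDist,
      evalAt_dzbar_sqDist, star_mul', star_neg, Complex.star_def, Complex.conj_ofReal,
      inner_conj_symm, smul_eq_mul, smul_eq_mul]
  have hnorm : (star fun p => -c * ⟪x - x₀, b p⟫_ℂ) ⬝ᵥ (fun p => -c * ⟪x - x₀, b p⟫_ℂ) =
      ((c * ‖x - x₀‖) ^ 2 : ℝ) := by
    simp only [dotProduct, Pi.star_apply, Complex.star_def, Complex.conj_mul', norm_mul, norm_neg,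
      Complex.norm_real]
    rw [mul_pow, ← b.sum_sq_norm_inner_left, Finset.mul_sum]
    norm_cast
    simp only [mul_pow, Real.norm_eq_abs, sq_abs]
  rw [evalAt_contract_inv_metric]
  simp only [hgrad]
  refine (contract_mul_star_le hinv _).trans_eq ?_
  rw [hnorm]
  push_cast
  rfl

theorem neg_le_evalAt_cutoff {A : ℝ} (hA : 0 < A) (hg : A⁻¹ • 1 ≤ K.metricAt x) {c : ℝ}
    (hc : 0 ≤ c) (hx : c * ‖x - x₀‖ ^ 2 ≤ 1) :
    -((c * (2 * A * (Fintype.card ι + 3)) : ℝ) : ℂ) ≤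
      evalAt x (2 * cutoff x₀ c * K.laplacian (cutoff x₀ c) - 6 * contract K.g⁻¹ fun p q =>
        dz (b p) (cutoff x₀ c) * dzbar (b q) (cutoff x₀ c)) := by
  have hinv := inv_le_smul_one hA hg
  obtain ⟨t, ht_nonneg, ht⟩ : ∃ t : ℝ, 0 ≤ t ∧ (t : ℂ) = (K.metricAt x)⁻¹.trace :=
    RCLike.nonneg_iff_exists_ofReal.mp
      (posDef_of_smul_one_le (inv_pos.mpr hA) hg).inv.posSemidef.trace_nonneg
  have ht_le : t ≤ A * Fintype.card ι :=
    Complex.real_le_real.mp ((ht.trans_le (trace_le_of_le_smul_one hinv)).trans_eq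
      (by push_cast; rfl))
  rw [map_sub, map_mul, map_mul, map_mul, map_ofNat, map_ofNat, evalAt_cutoff,
    evalAt_laplacian_cutoff, ← ht]
  refine le_trans ?_ (sub_le_sub_left (mul_le_mul_of_nonneg_left
    (evalAt_gradient_cutoff_le x₀ hinv c) (by norm_num)) _)
  have hlaplacian : (1 - c * ‖x - x₀‖ ^ 2) * (c * t) ≤ c * (A * Fintype.card ι) :=
    (mul_le_of_le_one_left (by positivity) (sub_le_self _ (by positivity))).trans (by gcongr)
  have hgradient : A * (c * ‖x - x₀‖) ^ 2 ≤ A * c := by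
    rw [mul_pow, pow_two, mul_assoc]
    exact mul_le_mul_of_nonneg_left (mul_le_of_le_one_right hc hx) hA.le
  norm_cast
  push_cast
  linarith

theorem IsRicciFlat.re_evalAt_calabi_le [Nonempty ι] (hK : K.IsRicciFlat) {A : ℝ} (hA : 0 < A)
    (hlower : ∀ x, A⁻¹ • 1 ≤ K.metricAt x) (hupper : ∀ x, K.metricAt x ≤ A • 1) {r : ℝ}
    (hr : 0 < r) :
    (evalAt x₀ K.calabi).re ≤ 2 * A ^ 3 * Fintype.card ι * (Fintype.card ι + 3) / r ^ 2 := by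
  have hpos (x : E) : (K.metricAt x).PosDef := posDef_of_smul_one_le (inv_pos.mpr hA) (hlower x)
  set C : ℝ := (r ^ 2)⁻¹ * (2 * A * (Fintype.card ι + 3)) with hC
  have hmax := re_evalAt_le_of_trace_mul_complexHessian_nonneg b (x₀ := x₀)
    (M := C * A * (A * Fintype.card ι)) (fun x => (hpos x).inv)
    (K.isSelfAdjoint_testFunction (isSelfAdjoint_cutoff x₀ (r ^ 2)⁻¹) (C * A)) hr.le
    (fun x hx => ?_) fun x hx => ?_
  · have htrace : 0 ≤ C * A * (K.metricAt x₀).trace.re :=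
      mul_nonneg (by positivity) (Complex.nonneg_iff.mp (hpos x₀).posSemidef.trace_nonneg).1
    rw [re_evalAt_testFunction_cutoff, sub_self, norm_zero] at hmax
    calc (evalAt x₀ K.calabi).re ≤ C * A * (A * Fintype.card ι) := by linarith
      _ = _ := by rw [hC]; ring
  · rw [← evalAt_laplacian]
    refine hK.evalAt_laplacian_testFunction_nonneg hA (hlower x)
      (isSelfAdjoint_cutoff _ _) (by positivity)
      (neg_le_evalAt_cutoff x₀ hA (hlower x) (by positivity) ?_)
    rw [inv_mul_le_one₀ (by positivity), ← dist_eq_norm]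
    have := Metric.mem_ball.mp hx
    gcongr
  · have htrace : (K.metricAt x).trace.re ≤ A * Fintype.card ι := by
      simpa using (Complex.le_def.mp (trace_le_of_le_smul_one (hupper x))).1
    rw [re_evalAt_testFunction_cutoff, ← dist_eq_norm, Metric.mem_sphere.mp hx,
      inv_mul_cancel₀ (by positivity), sub_self, zero_pow two_ne_zero, zero_mul, zero_add]
    gcongr

theorem IsRicciFlat.evalAt_calabi_eq_zero [Nonempty ι] (hK : K.IsRicciFlat) {A : ℝ} (hA : 0 < A)
    (hlower : ∀ x, A⁻¹ • 1 ≤ K.metricAt x) (hupper : ∀ x, K.metricAt x ≤ A • 1) :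
    evalAt x₀ K.calabi = 0 := by
  have hnonneg := evalAt_calabi_nonneg (posDef_of_smul_one_le (inv_pos.mpr hA) (hlower x₀))
  have hre : (evalAt x₀ K.calabi).re ≤ 0 :=
    ge_of_tendsto (Filter.Tendsto.const_div_atTop (Filter.tendsto_pow_atTop two_ne_zero) _) <|
      (Filter.eventually_gt_atTop 0).mono fun r hr =>
        hK.re_evalAt_calabi_le x₀ hA hlower hupper hr
  exact le_antisymm (Complex.nonpos_iff.mpr ⟨hre, (Complex.nonneg_iff.mp hnonneg).2.symm⟩) hnonneg

theorem IsRicciFlat.metricAt_eq (hK : K.IsRicciFlat) {A : ℝ} (hA : 0 < A)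
    (hlower : ∀ x, A⁻¹ • 1 ≤ K.metricAt x) (hupper : ∀ x, K.metricAt x ≤ A • 1) (x y : E) :
    K.metricAt x = K.metricAt y := by
  ext i j
  have : Nonempty ι := ⟨i⟩
  have hdz (i j p : ι) : dz (b p) (K.g i j) = 0 := smoothFunctions_ext fun x =>
    congrFun₃ (metricDerivAt_eq_zero (posDef_of_smul_one_le (inv_pos.mpr hA) (hlower x))
      (hK.evalAt_calabi_eq_zero x hA hlower hupper)) p i j
  have hdzbar (i j p : ι) : dzbar (b p) (K.g i j) = 0 := by
    rw [← K.isHermitian.apply, ← star_dz, hdz, star_zero]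
  refine evalAt_eq_of_dz_eq_zero_of_dzbar_eq_zero (fun v => ?_) (fun v => ?_) x y
  · rw [← b.sum_repr v]
    simp only [map_sum, map_smul, derivation_sum_apply, Derivation.smul_apply, hdz,
      smul_zero, Finset.sum_const_zero]
  · rw [← b.sum_repr v]
    simp only [map_sum, map_smulₛₗ, derivation_sum_apply, Derivation.smul_apply,
      hdzbar, smul_zero, Finset.sum_const_zero]

end InnerProductSpace

end FormalKahlerMetric

section LogDeterminant

open scoped ContDiff

variable {E : Type*} [NormedAddCommGroup E] [NormedSpace ℂ E] {f : smoothFunctions E}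

theorem isUnit_of_evalAt_ne_zero (hf : ∀ x, evalAt x f ≠ 0) : IsUnit f :=
  .of_mul_eq_one ⟨fun x => (evalAt x f)⁻¹, (contDiff_evalAt f).inv hf⟩
    (smoothFunctions_ext fun x => mul_inv_cancel₀ (hf x))

/-- The principal logarithm of a smooth function with values in the slit plane. -/
def smoothLog (f : smoothFunctions E) (hf : ∀ x, evalAt x f ∈ Complex.slitPlane) :
    smoothFunctions E :=
  ⟨fun x => Complex.log (evalAt x f), contDiff_iff_contDiffAt.mpr fun x =>
    ((Complex.contDiffAt_log (hf x)).restrict_scalars ℝ).comp x (contDiff_evalAt f).contDiffAt⟩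

variable (hf : ∀ x, evalAt x f ∈ Complex.slitPlane)

theorem dirDeriv_eq_mul_dirDeriv_smoothLog (v : E) :
    dirDeriv v f = f * dirDeriv v (smoothLog f hf) := smoothFunctions_ext fun x => by
  have hlog := (((Complex.hasDerivAt_log (hf x)).hasFDerivAt.restrictScalars ℝ).comp x
    (differentiable_evalAt f x).hasFDerivAt).fderiv
  have hderiv : evalAt x (dirDeriv v (smoothLog f hf)) =
      evalAt x (dirDeriv v f) * (evalAt x f)⁻¹ := DFunLike.congr_fun hlog v
  rw [map_mul, hderiv, mul_comm, inv_mul_cancel_right₀ (Complex.slitPlane_ne_zero (hf x))]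

theorem dz_eq_mul_dz_smoothLog (v : E) : dz v f = f * dz v (smoothLog f hf) := by
  rw [dz_apply, dz_apply, dirDeriv_eq_mul_dirDeriv_smoothLog hf,
    dirDeriv_eq_mul_dirDeriv_smoothLog hf, mul_smul_comm, mul_sub, mul_smul_comm]

end LogDeterminant

namespace FormalKahlerMetric

variable {E ι : Type*} [NormedAddCommGroup E] [NormedSpace ℂ E] [Fintype ι] [DecidableEq ι]
  {b : ι → E} (K : FormalKahlerMetric (wirtingerFrame b))

theorem trace_curvature (hdet : ∀ x, evalAt x K.g.det ∈ Complex.slitPlane) (p q : ι) :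
    (K.curvature p q).trace = dz (b p) (dzbar (b q) (smoothLog K.g.det hdet)) := by
  have hchristoffel : (K.christoffel p).trace = dz (b p) (smoothLog K.g.det hdet) :=
    K.isUnit_det.mul_left_cancel
      ((K.det_mul_trace_christoffel p).trans (dz_eq_mul_dz_smoothLog hdet (b p)))
  rw [curvature, ← AddMonoidHom.map_trace, hchristoffel, dz_dzbar_comm]
  rfl

end FormalKahlerMetric

theorem evalAt_dz_basisFun {n : ℕ} (i : Fin n) (f : smoothFunctions (Cn n)) (x : Cn n) :
    evalAt x (dz (EuclideanSpace.basisFun (Fin n) ℂ i) f) = wdz i (fun y => evalAt y f) x := by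
  rw [EuclideanSpace.basisFun_apply]
  rfl

theorem evalAt_dzbar_basisFun {n : ℕ} (i : Fin n) (f : smoothFunctions (Cn n)) (x : Cn n) :
    evalAt x (dzbar (EuclideanSpace.basisFun (Fin n) ℂ i) f) =
      wdzbar i (fun y => evalAt y f) x := by
  rw [EuclideanSpace.basisFun_apply]
  rfl

namespace KahlerMetricCn

variable {n : ℕ} (G : KahlerMetricCn n)

open scoped ComplexOrder MatrixOrder

/-- The coefficients of the metric, as a matrix of smooth functions. -/
def smoothCoeff : Matrix (Fin n) (Fin n) (smoothFunctions (Cn n)) :=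
  Matrix.of fun i j => ⟨fun x => G.g x i j, G.smooth i j⟩

theorem evalAt_det_smoothCoeff (x : Cn n) : evalAt x G.smoothCoeff.det = (G.g x).det :=
  RingHom.map_det (evalAt x : smoothFunctions (Cn n) →+* ℂ) G.smoothCoeff

theorem dz_smoothCoeff (i j k : Fin n) :
    dz (EuclideanSpace.basisFun (Fin n) ℂ k) (G.smoothCoeff i j) =
      dz (EuclideanSpace.basisFun (Fin n) ℂ i) (G.smoothCoeff k j) :=
  smoothFunctions_ext fun x => by
    rw [evalAt_dz_basisFun, evalAt_dz_basisFun]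
    exact G.kahler x i j k

/-- A nondegenerate Kähler metric on `ℂⁿ` as a formal Kähler metric over the Wirtinger derivatives
in the coordinate directions. -/
def toFormal (hdet : ∀ x, (G.g x).det ≠ 0) :
    FormalKahlerMetric (wirtingerFrame (EuclideanSpace.basisFun (Fin n) ℂ)) where
  g := G.smoothCoeff
  isUnit_det := isUnit_of_evalAt_ne_zero fun x => by
    rw [evalAt_det_smoothCoeff]
    exact hdet x
  isHermitian := Matrix.IsHermitian.ext fun i j => smoothFunctions_ext fun x =>
    (G.hermitian x).apply i j
  kahler := G.dz_smoothCoeff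

variable {G}

theorem isRicciFlat_toFormal (hG : ∀ x, (G.g x).PosDef) (hRic : ∀ x i j, G.Ric x i j = 0) :
    (G.toFormal fun x => (hG x).det_pos.ne').IsRicciFlat := fun i j => by
  have hslit (x : Cn n) : evalAt x (G.toFormal fun x => (hG x).det_pos.ne').g.det ∈
      Complex.slitPlane := by
    rw [toFormal, evalAt_det_smoothCoeff]
    exact .inl (Complex.pos_iff.mp (hG x).det_pos).1
  have hlog : (fun y => evalAt y (smoothLog _ hslit)) = fun y => Complex.log (G.g y).det :=
    funext fun y => congrArg Complex.log (G.evalAt_det_smoothCoeff y)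
  refine smoothFunctions_ext fun x => ?_
  rw [FormalKahlerMetric.trace_curvature _ hslit, evalAt_dz_basisFun]
  simp only [evalAt_dzbar_basisFun, hlog]
  exact neg_eq_zero.mp (hRic x i j)

theorem dotProduct_metric_mulVec (x : Cn n) (v : Fin n → ℂ) :
    star v ⬝ᵥ G.g x *ᵥ v = ∑ i, ∑ j, starRingEnd ℂ (v i) * G.g x i j * v j := by
  simp only [dotProduct, mulVec, Finset.mul_sum, mul_assoc]
  rfl

theorem smul_one_le_metric {a : ℝ} {x : Cn n}
    (h : ∀ v : Fin n → ℂ, a * ∑ i, Complex.normSq (v i) ≤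
      (∑ i, ∑ j, starRingEnd ℂ (v i) * G.g x i j * v j).re) : a • 1 ≤ G.g x := by
  refine le_of_re_dotProduct_mulVec_le (isHermitian_smul_one a) (G.hermitian x) fun v => ?_
  rw [re_dotProduct_smul_one_mulVec, dotProduct_metric_mulVec]
  exact h v

theorem metric_le_smul_one {a : ℝ} {x : Cn n}
    (h : ∀ v : Fin n → ℂ, (∑ i, ∑ j, starRingEnd ℂ (v i) * G.g x i j * v j).re ≤
      a * ∑ i, Complex.normSq (v i)) : G.g x ≤ a • 1 := by
  refine le_of_re_dotProduct_mulVec_le (G.hermitian x) (isHermitian_smul_one a) fun v => ?_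
  rw [re_dotProduct_smul_one_mulVec, dotProduct_metric_mulVec]
  exact h v

end KahlerMetricCn

/-- **Theorem 2.2** (Liouville theorem for Ricci-flat Kähler metrics on `ℂⁿ`).  If `ω` is a
Ricci-flat Kähler metric on `ℂⁿ` with `A⁻¹ ω_{ℂⁿ} ≤ ω ≤ A ω_{ℂⁿ}` on all of `ℂⁿ` for some
`A > 1` (expressed via the associated Hermitian quadratic forms), then `ω` has constant
coefficients, i.e. `ω` is parallel with respect to the Euclidean metric. -/
theorem liouville_ricci_flat_Cn {n : ℕ} (G : KahlerMetricCn n) (A : ℝ) (hA : 1 < A)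
    (hbound : ∀ (x : Cn n) (v : Fin n → ℂ),
      A⁻¹ * (∑ i, Complex.normSq (v i)) ≤ (∑ i, ∑ j, starRingEnd ℂ (v i) * G.g x i j * v j).re ∧
      (∑ i, ∑ j, starRingEnd ℂ (v i) * G.g x i j * v j).re ≤ A * (∑ i, Complex.normSq (v i)))
    (hricciflat : ∀ (x : Cn n) (i j : Fin n), G.Ric x i j = 0) :
    ∀ x y : Cn n, G.g x = G.g y := by
  have hA₀ : 0 < A := zero_lt_one.trans hA
  have hlower := fun x => KahlerMetricCn.smul_one_le_metric fun v => (hbound x v).1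
  have hupper := fun x => KahlerMetricCn.metric_le_smul_one fun v => (hbound x v).2
  have hpos := fun x => posDef_of_smul_one_le (inv_pos.mpr hA₀) (hlower x)
  exact (KahlerMetricCn.isRicciFlat_toFormal hpos hricciflat).metricAt_eq hA₀ hlower hupper
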